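/- arXiv:math/0603292 — 11 statements merged into one kernel-verified Lean document; each statement's English description precedes it below -/
import Mathlib

section
/- For every real number x ≥ 1, the sum R_{1,2}(x) := Σ_{x < n ≤ 2x} r(n) satisfies R_{1,2}(x) ≤ 4.8x. -/
/-- `r n` is the number of representations of `n` as a sum of two squares of integers. -/
noncomputable def r (n : ℕ) : ℕ := Set.ncard {p : ℤ × ℤ | p.1 ^ 2 + p.2 ^ 2 = (n : ℤ)}

/-- lattice points of norm at most `N` -/
noncomputable def disc (N : ℕ) : Finset (ℤ × ℤ) :=
  (Finset.Icc (-(N:ℤ)) N ×ˢ Finset.Icc (-(N:ℤ)) N).filter (fun p => p.1 ^ 2 + p.2 ^ 2 ≤ (N : ℤ))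

theorem mem_disc (N : ℕ) (p : ℤ × ℤ) : p ∈ disc N ↔ p.1 ^ 2 + p.2 ^ 2 ≤ (N : ℤ) := by
  unfold disc
  simp only [Finset.mem_filter, Finset.mem_product, Finset.mem_Icc, and_iff_right_iff_imp]
  intro h
  have h1 : |p.1| ≤ p.1 ^ 2 := by
    rw [← sq_abs]; exact Int.le_self_sq _
  have h2 : |p.2| ≤ p.2 ^ 2 := by
    rw [← sq_abs]; exact Int.le_self_sq _
  have := abs_le.1 (show |p.1| ≤ N by nlinarith [sq_nonneg p.2])
  have := abs_le.1 (show |p.2| ≤ N by nlinarith [sq_nonneg p.1])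
  tauto

theorem r_eq (n N : ℕ) (h : n ≤ N) :
    r n = ((disc N).filter (fun p => (p.1 ^ 2 + p.2 ^ 2).toNat = n)).card := by
  unfold r
  rw [← Set.ncard_coe_finset]
  congr 1
  ext p
  have : 0 ≤ p.1 ^ 2 + p.2 ^ 2 := by positivity
  simp only [Set.mem_ofPred_eq, Finset.coe_filter, mem_disc]
  omega

theorem sum_r_eq (M N : ℕ) :
    ∑ n ∈ Finset.Ioc M N, r n = (disc N \ disc M).card := by
  rw [Finset.card_eq_sum_card_fiberwise (f := fun p : ℤ × ℤ => (p.1 ^ 2 + p.2 ^ 2).toNat)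
    (t := Finset.Ioc M N)]
  · apply Finset.sum_congr rfl
    intro n hn
    rw [Finset.mem_Ioc] at hn
    rw [r_eq n N hn.2]
    congr 1
    ext p
    simp only [Finset.mem_filter, Finset.mem_sdiff, mem_disc]
    omega
  · intro p hp
    simp only [Finset.coe_sdiff, Set.mem_sdiff, Finset.mem_coe, mem_disc] at hp
    simp only [Finset.coe_Ioc, Set.mem_Ioc]
    omega

theorem card_even (N : ℕ) :
    ((disc N).filter (fun p => (p.1 + p.2) % 2 = 0)).card = (disc (N / 2)).card := by
  symm
  apply Finset.card_bij (fun p _ => (p.1 + p.2, p.1 - p.2))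
  · intro p hp
    rw [mem_disc] at hp
    rw [Finset.mem_filter, mem_disc]
    have : (p.1 + p.2) ^ 2 + (p.1 - p.2) ^ 2 = 2 * (p.1 ^ 2 + p.2 ^ 2) := by ring
    constructor
    · dsimp only; rw [this]; push_cast at hp; omega
    · dsimp only; omega
  · rintro ⟨a, b⟩ _ ⟨c, d⟩ _ h
    simp only [Prod.mk.injEq] at h ⊢
    omega
  · rintro ⟨a, b⟩ h
    rw [Finset.mem_filter, mem_disc] at h
    obtain ⟨h1, h2⟩ := h
    dsimp only at h1 h2
    obtain ⟨c, hc⟩ : ∃ c, a + b = 2 * c := ⟨(a + b) / 2, by omega⟩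
    refine ⟨(c, a - c), ?_, ?_⟩
    · rw [mem_disc]
      have hb : b = 2 * c - a := by omega
      subst hb
      have : a ^ 2 + (2 * c - a) ^ 2 = 2 * (c ^ 2 + (a - c) ^ 2) := by ring
      rw [this] at h1
      push_cast
      omega
    · simp only [Prod.mk.injEq]; omega

theorem sum_r_odd (N : ℕ) :
    ∑ n ∈ Finset.Ioc (N / 2) N, r n = ((disc N).filter (fun p => ¬ (p.1 + p.2) % 2 = 0)).card := by
  rw [sum_r_eq]
  have h1 := Finset.card_filter_add_card_filter_not (s := disc N)
    (fun p : ℤ × ℤ => (p.1 + p.2) % 2 = 0)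
  rw [card_even] at h1
  have h2 : disc (N / 2) ⊆ disc N := by
    intro p
    rw [mem_disc, mem_disc]
    intro h
    push_cast at h
    omega
  rw [Finset.card_sdiff_of_subset h2]
  omega

theorem disc_box (N s : ℕ) (h : N < (s + 1) ^ 2) (p : ℤ × ℤ) (hp : p ∈ disc N) :
    p ∈ Finset.Icc (-(s:ℤ)) s ×ˢ Finset.Icc (-(s:ℤ)) s := by
  rw [mem_disc] at hp
  have h' : (N : ℤ) < ((s:ℤ) + 1) ^ 2 := by exact_mod_cast h
  have h1 := abs_lt_of_sq_lt_sq' (show p.1 ^ 2 < ((s:ℤ) + 1) ^ 2 by nlinarith [sq_nonneg p.2])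
    (by positivity)
  have h2 := abs_lt_of_sq_lt_sq' (show p.2 ^ 2 < ((s:ℤ) + 1) ^ 2 by nlinarith [sq_nonneg p.1])
    (by positivity)
  simp only [Finset.mem_product, Finset.mem_Icc]
  omega

theorem box_odd (s : ℕ) :
    ((Finset.Icc (-(s:ℤ)) s ×ˢ Finset.Icc (-(s:ℤ)) s).filter
      (fun p => ¬ (p.1 + p.2) % 2 = 0)).card ≤ 2 * s ^ 2 + 2 * s := by
  -- shifting `u` by one injects the odd points into the even ones other than a corner
  set B := Finset.Icc (-(s:ℤ)) s ×ˢ Finset.Icc (-(s:ℤ)) s with hB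
  have h1 := Finset.card_filter_add_card_filter_not (s := B)
    (fun p : ℤ × ℤ => (p.1 + p.2) % 2 = 0)
  have hc : B.card = (2 * s + 1) ^ 2 := by
    rw [hB, Finset.card_product, Int.card_Icc, sq]
    congr 1 <;> omega
  have h2 : (B.filter (fun p => ¬ (p.1 + p.2) % 2 = 0)).card ≤
      (B.filter (fun p => (p.1 + p.2) % 2 = 0)).card := by
    apply Finset.card_le_card_of_injOn
      (fun p : ℤ × ℤ => if p.1 < (s:ℤ) then (p.1 + 1, p.2) else (-(s:ℤ), p.2 + 1))
    · rintro ⟨a, b⟩ h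
      simp only [hB, Finset.coe_filter, Set.mem_ofPred_eq, Finset.mem_product, Finset.mem_Icc] at h ⊢
      split_ifs <;> dsimp only <;> omega
    · rintro ⟨a, b⟩ h ⟨c, d⟩ h' he
      simp only [hB, Finset.coe_filter, Set.mem_ofPred_eq, Finset.mem_product, Finset.mem_Icc]
        at h h' he
      split_ifs at he <;> simp only [Prod.mk.injEq] at he ⊢ <;> omega
  rw [hc] at h1
  nlinarith

theorem small_case : ∀ N : Fin 25, 2 ≤ N.val →
    5 * ((Finset.Icc (-4:ℤ) 4 ×ˢ Finset.Icc (-4:ℤ) 4).filter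
      (fun p => p.1 ^ 2 + p.2 ^ 2 ≤ (N.val : ℤ) ∧ ¬ (p.1 + p.2) % 2 = 0)).card ≤ 12 * N.val := by
  decide +kernel

theorem nat_bound (N : ℕ) (hN : 2 ≤ N) : 5 * ∑ n ∈ Finset.Ioc (N / 2) N, r n ≤ 12 * N := by
  rw [sum_r_odd]
  by_cases h : N < 25
  · refine le_trans (Nat.mul_le_mul_left 5 (Finset.card_le_card ?_)) (small_case ⟨N, h⟩ hN)
    intro p hp
    rw [Finset.mem_filter] at hp ⊢
    exact ⟨disc_box N 4 (by omega) p hp.1, (mem_disc _ _).1 hp.1, hp.2⟩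
  · have h1 : ((disc N).filter (fun p => ¬ (p.1 + p.2) % 2 = 0)).card ≤ _ :=
      le_trans (Finset.card_le_card (Finset.filter_subset_filter _
        (disc_box N (Nat.sqrt N) (Nat.lt_succ_sqrt' N)))) (box_odd (Nat.sqrt N))
    have h2 : 5 ≤ Nat.sqrt N := by rw [Nat.le_sqrt]; omega
    have h3 := Nat.sqrt_le' N
    nlinarith

/-- For every real `x ≥ 1`, one has `R_{1,2}(x) = ∑_{x < n ≤ 2x} r(n) ≤ 4.8x`. -/
theorem sum_r_Ioc_le (x : ℝ) (hx : 1 ≤ x) :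
    (∑ n ∈ Finset.Ioc ⌊x⌋₊ ⌊2 * x⌋₊, (r n : ℝ)) ≤ 4.8 * x := by
  have h0 : ⌊x⌋₊ = ⌊2 * x⌋₊ / 2 := by
    rw [← Nat.floor_div_ofNat]
    congr 1
    ring
  have h1 : 2 ≤ ⌊2 * x⌋₊ := Nat.le_floor (by push_cast; linarith)
  have h2 : (⌊2 * x⌋₊ : ℝ) ≤ 2 * x := Nat.floor_le (by linarith)
  have h3 := nat_bound _ h1
  rw [← h0] at h3
  have h4 : (5 : ℝ) * ∑ n ∈ Finset.Ioc ⌊x⌋₊ ⌊2 * x⌋₊, (r n : ℝ) ≤ 12 * (⌊2 * x⌋₊ : ℝ) := by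
    exact_mod_cast h3
  linarith
end

section
/- For every positive integer n, one has r(n)² ≤ Σ_{d | n} r(d)·r(n/d), where the sum runs over all positive divisors d of n. -/
lemma r_finite (n : ℕ) : {z : GaussianInt | z.norm = (n : ℤ)}.Finite := by
  apply Set.Finite.subset (((Set.finite_Icc (-(n:ℤ)) n).prod (Set.finite_Icc (-(n:ℤ)) n)).image
    (fun p : ℤ × ℤ => (⟨p.1, p.2⟩ : GaussianInt)))
  intro z hz
  simp only [Set.mem_ofPred_eq, Zsqrtd.norm_def] at hz
  refine ⟨(z.re, z.im), ?_, by rfl⟩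
  simp only [Set.mem_prod, Set.mem_Icc]
  have h1 : |z.re| ≤ z.re ^ 2 := by
    rw [← sq_abs]; exact Int.le_self_sq _
  have h2 : |z.im| ≤ z.im ^ 2 := by
    rw [← sq_abs]; exact Int.le_self_sq _
  have h3 := sq_nonneg z.re
  have h4 := sq_nonneg z.im
  rw [← abs_le, ← abs_le]
  constructor <;> nlinarith

noncomputable def RR (n : ℕ) : Finset GaussianInt := (r_finite n).toFinset

lemma mem_RR (n : ℕ) (z : GaussianInt) : z ∈ RR n ↔ z.norm = (n : ℤ) := by simp [RR]

lemma r_eq_s4 (n : ℕ) : r n = (RR n).card := by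
  rw [← Set.ncard_coe_finset, r]
  apply Set.ncard_congr (fun p _ => (⟨p.1, p.2⟩ : GaussianInt))
  · intro p hp
    simp only [Set.mem_ofPred_eq] at hp
    simp only [Finset.mem_coe, mem_RR, Zsqrtd.norm_def]
    linarith
  · intro p q _ _ h
    rw [Zsqrtd.ext_iff] at h
    exact Prod.ext h.1 h.2
  · intro z hz
    simp only [Finset.mem_coe, mem_RR, Zsqrtd.norm_def] at hz
    exact ⟨(z.re, z.im), by simp only [Set.mem_ofPred_eq]; linarith, by rfl⟩

lemma key [NormalizedGCDMonoid GaussianInt] (n : ℕ) (hn : 0 < n) (x y : GaussianInt)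
    (hx : x.norm = n) (hy : y.norm = n) :
    ∃ c a : GaussianInt, c * a = x ∧ normalize c * star a = y := by
  obtain ⟨a, b, ha, hb, hu⟩ := extract_gcd x y
  have hg : gcd x y ≠ 0 := by
    intro h
    rw [h, zero_mul] at ha
    rw [ha, Zsqrtd.norm_zero] at hx
    omega
  have hN : a * star a = b * star b := by
    have h1 : x * star x = y * star y := by
      rw [← Zsqrtd.norm_eq_mul_conj, ← Zsqrtd.norm_eq_mul_conj, hx, hy]
    generalize gcd x y = g at *
    rw [ha, hb, star_mul, star_mul] at h1
    have hs : star g ≠ 0 := by simpa using hg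
    apply mul_left_cancel₀ (mul_ne_zero hg hs)
    linear_combination h1
  have h1 : a ∣ star b := by
    have h : a ∣ b * star b := ⟨star a, hN.symm⟩
    exact (gcd_isUnit_iff_isRelPrime.1 hu).dvd_of_dvd_mul_left h
  have h2 : b ∣ star a := by
    have h : b ∣ a * star a := ⟨star b, hN⟩
    exact (gcd_isUnit_iff_isRelPrime.1 hu).symm.dvd_of_dvd_mul_left h
  have h3 : star a ∣ b := by
    obtain ⟨t, ht⟩ := h1
    refine ⟨star t, ?_⟩
    rw [← star_star b, ht, star_mul, mul_comm]
  obtain ⟨w, hw⟩ := associated_of_dvd_dvd h3 h2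
  have hwn : (w : GaussianInt) * star (w : GaussianInt) = 1 := by
    rw [← Zsqrtd.norm_eq_mul_conj, (Zsqrtd.norm_eq_one_iff' (by norm_num) _).2 w.isUnit]
    rfl
  refine ⟨gcd x y * w, star (w : GaussianInt) * a, ?_, ?_⟩
  · conv_rhs => rw [ha]
    linear_combination (gcd x y * a) * hwn
  · have hA : Associated (gcd x y * w) (gcd x y) := associated_mul_unit_left _ _ w.isUnit
    rw [normalize_eq_normalize_iff_associated.2 hA, normalize_gcd, star_mul, star_star]
    conv_rhs => rw [hb, ← hw]

/-- For every positive integer `n`, `r(n)² ≤ ∑_{d ∣ n} r(d)·r(n/d)`. -/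
theorem r_sq_le_sum_divisors (n : ℕ) (hn : 0 < n) :
    r n ^ 2 ≤ ∑ d ∈ n.divisors, r d * r (n / d) := by
  classical
  let _ : StrongNormalizationMonoid GaussianInt :=
    UniqueFactorizationMonoid.strongNormalizationMonoid
  let _ : NormalizedGCDMonoid GaussianInt := UniqueFactorizationMonoid.toNormalizedGCDMonoid _
  have h := Finset.card_le_card_of_surjOn
    (s := n.divisors.sigma (fun d => RR d ×ˢ RR (n / d))) (t := RR n ×ˢ RR n)
    (fun p => (p.2.1 * p.2.2, normalize p.2.1 * star p.2.2)) (by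
      rintro ⟨x, y⟩ hxy
      simp only [Finset.coe_product, Set.mem_prod, Finset.mem_coe, mem_RR] at hxy
      obtain ⟨c, a, h1, h2⟩ := key n hn x y hxy.1 hxy.2
      have hN : c.norm.natAbs * a.norm.natAbs = n := by
        rw [← Int.natAbs_mul, ← Zsqrtd.norm_mul, h1, hxy.1, Int.natAbs_natCast]
      have hc : 0 < c.norm.natAbs := Nat.pos_of_ne_zero (by rintro h; simp [h] at hN; omega)
      refine ⟨⟨c.norm.natAbs, (c, a)⟩, ?_, by simp [h1, h2]⟩
      have hd : n / c.norm.natAbs = a.norm.natAbs := by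
        rw [← hN, Nat.mul_div_cancel_left _ hc]
      simp only [Finset.mem_coe, Finset.mem_sigma, Finset.mem_product, mem_RR, hd,
        Nat.mem_divisors]
      refine ⟨⟨⟨_, hN.symm⟩, hn.ne'⟩, ?_, ?_⟩
      · exact (Int.natAbs_of_nonneg (GaussianInt.norm_nonneg _)).symm
      · exact (Int.natAbs_of_nonneg (GaussianInt.norm_nonneg _)).symm)
  simpa [Finset.card_sigma, Finset.card_product, r_eq_s4, sq] using h
end

section
/- For every real number Z ≥ 1, one has Σ_{1 ≤ n ≤ Z} r(n)/n ≤ 4·log(e·Z). -/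
/-- nonneg quadrant box -/
def qbox (M : ℕ) : Finset (ℕ × ℕ) := Finset.Icc 1 M ×ˢ Finset.range (M + 1)

theorem r_le (n M : ℕ) (hn : 1 ≤ n) (hM : n < (M + 1) ^ 2) :
    r n ≤ 4 * ((qbox M).filter (fun p => p.1 ^ 2 + p.2 ^ 2 = n)).card := by
  classical
  set Q := (qbox M).filter (fun p => p.1 ^ 2 + p.2 ^ 2 = n) with hQ
  let f1 : ℕ × ℕ → ℤ × ℤ := fun p => ((p.1 : ℤ), (p.2 : ℤ))
  let f2 : ℕ × ℕ → ℤ × ℤ := fun p => (-(p.2 : ℤ), (p.1 : ℤ))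
  let f3 : ℕ × ℕ → ℤ × ℤ := fun p => (-(p.1 : ℤ), -(p.2 : ℤ))
  let f4 : ℕ × ℕ → ℤ × ℤ := fun p => ((p.2 : ℤ), -(p.1 : ℤ))
  let U : Finset (ℤ × ℤ) := (Q.image f1 ∪ Q.image f2) ∪ (Q.image f3 ∪ Q.image f4)
  have hmem : ∀ a b : ℕ, 1 ≤ a → a ^ 2 + b ^ 2 = n → (a, b) ∈ Q := by
    intro a b ha hab
    have h1 : a < M + 1 := lt_of_pow_lt_pow_left₀ 2 (by omega) (by nlinarith)
    have h2 : b < M + 1 := lt_of_pow_lt_pow_left₀ 2 (by omega) (by nlinarith)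
    simp only [hQ, qbox, Finset.mem_filter, Finset.mem_product, Finset.mem_Icc, Finset.mem_range]
    exact ⟨⟨⟨ha, by omega⟩, h2⟩, hab⟩
  have hsub : {p : ℤ × ℤ | p.1 ^ 2 + p.2 ^ 2 = (n : ℤ)} ⊆ (U : Set (ℤ × ℤ)) := by
    rintro ⟨x, y⟩ h
    simp only [Set.mem_ofPred_eq] at h
    have hq1 : x.natAbs ^ 2 + y.natAbs ^ 2 = n := by
      zify; simpa using h
    have hq2 : y.natAbs ^ 2 + x.natAbs ^ 2 = n := by omega
    have h0 : ¬ (x = 0 ∧ y = 0) := by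
      rintro ⟨rfl, rfl⟩
      simp at h; omega
    simp only [U, Finset.coe_union, Finset.coe_image, Set.mem_union, Set.mem_image,
      Finset.mem_coe]
    by_cases c1 : 0 < x ∧ 0 ≤ y
    · exact Or.inl (Or.inl ⟨_, hmem x.natAbs y.natAbs (by omega) hq1,
        Prod.ext (by simp only [f1]; omega) (by simp only [f1]; omega)⟩)
    by_cases c2 : x ≤ 0 ∧ 0 < y
    · exact Or.inl (Or.inr ⟨_, hmem y.natAbs x.natAbs (by omega) hq2,
        Prod.ext (by simp only [f2]; omega) (by simp only [f2]; omega)⟩)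
    by_cases c3 : x < 0 ∧ y ≤ 0
    · exact Or.inr (Or.inl ⟨_, hmem x.natAbs y.natAbs (by omega) hq1,
        Prod.ext (by simp only [f3]; omega) (by simp only [f3]; omega)⟩)
    · exact Or.inr (Or.inr ⟨_, hmem y.natAbs x.natAbs (by omega) hq2,
        Prod.ext (by simp only [f4]; omega) (by simp only [f4]; omega)⟩)
  have h1 : r n ≤ U.card := by
    unfold r
    rw [← Set.ncard_coe_finset]
    exact Set.ncard_le_ncard hsub (Finset.finite_toSet U)
  have e1 := Finset.card_image_le (s := Q) (f := f1)
  have e2 := Finset.card_image_le (s := Q) (f := f2)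
  have e3 := Finset.card_image_le (s := Q) (f := f3)
  have e4 := Finset.card_image_le (s := Q) (f := f4)
  have u0 := Finset.card_union_le (Q.image f1 ∪ Q.image f2) (Q.image f3 ∪ Q.image f4)
  have u1 := Finset.card_union_le (Q.image f1) (Q.image f2)
  have u2 := Finset.card_union_le (Q.image f3) (Q.image f4)
  have : U.card ≤ 4 * Q.card := by
    simp only [U]; omega
  omega

/-- box sum -/
noncomputable def T (M : ℕ) : ℝ := ∑ p ∈ qbox M, 1 / ((p.1 : ℝ) ^ 2 + (p.2 : ℝ) ^ 2)

theorem sum_le_T (N M : ℕ) (hM : N < (M + 1) ^ 2) :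
    (∑ n ∈ Finset.Icc 1 N, (r n : ℝ) / n) ≤ 4 * T M := by
  have h1 : ∀ n ∈ Finset.Icc 1 N, (r n : ℝ) / n ≤
      4 * ∑ p ∈ (qbox M), if p.1 ^ 2 + p.2 ^ 2 = n then
        1 / ((p.1 : ℝ) ^ 2 + (p.2 : ℝ) ^ 2) else 0 := by
    intro n hn
    rw [Finset.mem_Icc] at hn
    have h := r_le n M hn.1 (by omega)
    have hn0 : (0 : ℝ) < n := by exact_mod_cast hn.1
    rw [← Finset.sum_filter]
    have : ∑ p ∈ (qbox M).filter (fun p => p.1 ^ 2 + p.2 ^ 2 = n),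
        1 / ((p.1 : ℝ) ^ 2 + (p.2 : ℝ) ^ 2) =
        ∑ p ∈ (qbox M).filter (fun p => p.1 ^ 2 + p.2 ^ 2 = n), 1 / (n : ℝ) := by
      apply Finset.sum_congr rfl
      intro p hp
      rw [← (Finset.mem_filter.1 hp).2]
      push_cast; rfl
    rw [this, Finset.sum_const, nsmul_eq_mul, div_le_iff₀ hn0]
    have h' : (r n : ℝ) ≤ 4 * ((qbox M).filter (fun p => p.1 ^ 2 + p.2 ^ 2 = n)).card := by
      exact_mod_cast h
    field_simp
    linarith
  refine (Finset.sum_le_sum h1).trans ?_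
  rw [← Finset.mul_sum, Finset.sum_comm]
  unfold T
  gcongr with p hp
  rw [Finset.sum_ite_eq]
  split_ifs
  · exact le_rfl
  · positivity

theorem T_eq (M : ℕ) : T M = ∑ a ∈ Finset.range M, ∑ b ∈ Finset.range (M + 1),
    1 / (((a : ℝ) + 1) ^ 2 + (b : ℝ) ^ 2) := by
  unfold T qbox
  rw [Finset.sum_product, ← Finset.Ico_add_one_right_eq_Icc, Finset.sum_Ico_eq_sum_range]
  refine Finset.sum_congr (by simp) fun a _ => Finset.sum_congr rfl fun b _ => ?_
  push_cast
  rw [add_comm (1 : ℝ)]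

theorem T_succ (M : ℕ) : T (M + 1) ≤ T M + 2 / ((M : ℝ) + 1) := by
  rw [T_eq, T_eq, Finset.sum_range_succ]
  have h1 : ∑ b ∈ Finset.range (M + 1 + 1), 1 / (((M : ℝ) + 1) ^ 2 + (b : ℝ) ^ 2) ≤
      ((M : ℝ) + 2) * (1 / ((M : ℝ) + 1) ^ 2) := by
    have := Finset.sum_le_card_nsmul (Finset.range (M + 1 + 1))
      (fun b : ℕ => 1 / (((M : ℝ) + 1) ^ 2 + (b : ℝ) ^ 2)) (1 / ((M : ℝ) + 1) ^ 2) (by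
        intro b _
        apply one_div_le_one_div_of_le (by positivity)
        nlinarith [sq_nonneg (b : ℝ)])
    rw [Finset.card_range, nsmul_eq_mul] at this
    push_cast at this
    linarith
  simp_rw [Finset.sum_range_succ _ (M + 1)] at h1 ⊢
  rw [Finset.sum_add_distrib]
  have h2 : ∑ a ∈ Finset.range M, 1 / (((a : ℝ) + 1) ^ 2 + ((M + 1 : ℕ) : ℝ) ^ 2) ≤
      (M : ℝ) * (1 / ((M : ℝ) + 1) ^ 2) := by
    have := Finset.sum_le_card_nsmul (Finset.range M)
      (fun a : ℕ => 1 / (((a : ℝ) + 1) ^ 2 + ((M + 1 : ℕ) : ℝ) ^ 2)) (1 / ((M : ℝ) + 1) ^ 2) (by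
        intro b _
        apply one_div_le_one_div_of_le (by positivity)
        push_cast
        nlinarith [sq_nonneg ((b : ℝ) + 1)])
    rwa [Finset.card_range, nsmul_eq_mul] at this
  have h3 : ((M : ℝ) + 2) * (1 / ((M : ℝ) + 1) ^ 2) + (M : ℝ) * (1 / ((M : ℝ) + 1) ^ 2)
      = 2 / ((M : ℝ) + 1) := by
    field_simp; ring
  linarith

theorem T_one : T 1 = 3 / 2 := by
  rw [T_eq]; norm_num [Finset.sum_range_succ]

theorem T_le (M : ℕ) (hM : 2 ≤ M) : T M ≤ 1 + 2 * Real.log M := by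
  induction M, hM using Nat.le_induction with
  | base =>
    rw [T_eq]; norm_num [Finset.sum_range_succ]
    linarith [Real.log_two_gt_d9]
  | succ m hm ih =>
    have h := T_succ m
    have hm0 : (0 : ℝ) < m := by exact_mod_cast (by omega : 0 < m)
    have h1 := Real.one_sub_inv_le_log_of_pos (x := ((m : ℝ) + 1) / m) (by positivity)
    rw [Real.log_div (by positivity) (by positivity)] at h1
    have h2 : 1 - (((m : ℝ) + 1) / m)⁻¹ = 1 / ((m : ℝ) + 1) := by
      field_simp; ring
    have h3 : 2 / ((m : ℝ) + 1) = 2 * (1 / ((m : ℝ) + 1)) := by ring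
    push_cast
    linarith

theorem r_one : r 1 ≤ 4 := by
  have h := r_le 1 1 le_rfl (by norm_num)
  have : ((qbox 1).filter (fun p => p.1 ^ 2 + p.2 ^ 2 = 1)).card = 1 := by decide
  omega

/-- For every real `Z ≥ 1`, one has `∑_{1 ≤ n ≤ Z} r(n)/n ≤ 4·log(e·Z)`. -/
theorem sum_r_div_le (Z : ℝ) (hZ : 1 ≤ Z) :
    (∑ n ∈ Finset.Icc 1 ⌊Z⌋₊, (r n : ℝ) / n) ≤ 4 * Real.log (Real.exp 1 * Z) := by
  rw [Real.log_mul (Real.exp_ne_zero _) (by positivity), Real.log_exp]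
  have hfl : ((⌊Z⌋₊ : ℕ) : ℝ) ≤ Z := Nat.floor_le (by linarith)
  have hN : 1 ≤ ⌊Z⌋₊ := Nat.le_floor (by simpa using hZ)
  generalize ⌊Z⌋₊ = N at hfl hN
  have hN0 : (0 : ℝ) < N := by exact_mod_cast hN
  have hlog : Real.log N ≤ Real.log Z := Real.log_le_log hN0 hfl
  refine le_trans ?_ (mul_le_mul_of_nonneg_left (add_le_add_right hlog 1) (by norm_num))
  rcases (by omega : N = 1 ∨ (2 ≤ N ∧ N < 4) ∨ 4 ≤ N) with h | h | h
  · subst h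
    have : (r 1 : ℝ) ≤ 4 := by exact_mod_cast r_one
    simpa using this
  · have h1 := sum_le_T N 1 (by omega)
    rw [T_one] at h1
    have h2 : Real.log 2 ≤ Real.log N :=
      Real.log_le_log (by norm_num) (by exact_mod_cast h.1)
    linarith [Real.log_two_gt_d9]
  · have h1 := sum_le_T N (Nat.sqrt N) (Nat.lt_succ_sqrt' N)
    have hs : 2 ≤ Nat.sqrt N := Nat.le_sqrt.2 (by omega)
    have h2 := T_le _ hs
    have hs0 : (0 : ℝ) < (Nat.sqrt N : ℝ) := by exact_mod_cast (by omega : 0 < Nat.sqrt N)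
    have h3 : Real.log ((Nat.sqrt N : ℝ) ^ 2) ≤ Real.log N :=
      Real.log_le_log (by positivity) (by exact_mod_cast Nat.sqrt_le' N)
    rw [Real.log_pow] at h3
    push_cast at h3
    linarith
end

section
/- Let a > 0, and for m = (m₁,m₂,m₃) ∈ ℤ³ set g*(m) := max(√(a(m₁² + m₂²)), |m₃|/a), and g₀ := min(√a, 1/a). Then for every real Z > 0, Σ_{m ∈ ℤ³, 0 < g*(m) ≤ Z} (g*(m))^{−3} ≤ (42/g₀³)·log₊(1.4·Z/g₀), where log₊(w) := max(log w, 0). -/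
/-- Abel summation in sorted order. -/
lemma abel_aux {α : Type*} [DecidableEq α] (h : α → ℝ) (T : Finset α) :
    (∀ m ∈ T, 1 ≤ h m) →
    (∀ m ∈ T, ((T.filter (fun x => h x ≤ h m)).card : ℝ) ≤ 14 * h m ^ 3) →
    (∑ m ∈ T, (h m ^ 3)⁻¹ ≤ T.card) ∧
      (14 ≤ T.card → ∑ m ∈ T, (h m ^ 3)⁻¹ ≤ 14 + 14 * Real.log (T.card / 14)) := by
  induction T using Finset.induction_on_max_value h with
  | empty => simp
  | insert b s hb hmax ih =>
    intro h1 hc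
    obtain ⟨i1, i2⟩ := ih (fun m hm => h1 m (Finset.mem_insert_of_mem hm)) (by
      intro m hm
      refine le_trans ?_ (hc m (Finset.mem_insert_of_mem hm))
      exact_mod_cast Finset.card_le_card
        (Finset.filter_subset_filter _ (Finset.subset_insert b s)))
    have hb1 := h1 b (Finset.mem_insert_self _ _)
    have hb3 : 1 ≤ h b ^ 3 := one_le_pow₀ hb1
    have hcb := hc b (Finset.mem_insert_self _ _)
    rw [Finset.filter_true_of_mem (by
      intro x hx
      rcases Finset.mem_insert.1 hx with rfl | hx
      · exact le_rfl
      · exact hmax x hx)] at hcb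
    rw [Finset.sum_insert hb]
    rw [Finset.card_insert_of_notMem hb] at hcb ⊢
    have hinv : (h b ^ 3)⁻¹ ≤ 1 := inv_le_one_of_one_le₀ hb3
    push_cast at hcb ⊢
    refine ⟨by linarith, fun hn => ?_⟩
    rcases Nat.eq_or_lt_of_le hn with he | hlt
    · have hs : s.card = 13 := by omega
      rw [hs] at i1 ⊢
      norm_num at i1 ⊢
      linarith
    · have hs : 14 ≤ s.card := by omega
      have i2' := i2 hs
      have hn0 : (14 : ℝ) ≤ s.card := by exact_mod_cast hs
      set n : ℝ := (s.card : ℝ)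
      have e1 : (h b ^ 3)⁻¹ ≤ 14 / (n + 1) := by
        rw [inv_eq_one_div, div_le_div_iff₀ (by linarith) (by linarith)]
        linarith
      have e2 : 1 / (n + 1) ≤ Real.log ((n + 1) / n) := by
        have := Real.one_sub_inv_le_log_of_pos (x := (n + 1) / n) (by positivity)
        refine le_trans (le_of_eq ?_) this
        field_simp
        ring
      have e3 : Real.log ((n + 1) / 14) = Real.log (n / 14) + Real.log ((n + 1) / n) := by
        rw [← Real.log_mul (by positivity) (by positivity)]
        congr 1
        field_simp
      have e4 : 14 / (n + 1) = 14 * (1 / (n + 1)) := by ring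
      rw [e3]
      linarith

/-- Integer lattice count. -/
lemma count_int (Q : ℕ) (hQ : 1 ≤ Q) (T : Finset (ℤ × ℤ × ℤ))
    (h0 : ∀ m ∈ T, m ≠ 0)
    (h1 : ∀ m ∈ T, m.1 ^ 2 + m.2.1 ^ 2 ≤ (Q : ℤ)) (h2 : ∀ m ∈ T, m.2.2 ^ 2 ≤ (Q : ℤ)) :
    T.card ^ 2 ≤ 196 * Q ^ 3 := by
  set k := Nat.sqrt Q with hk
  have hk1 : k * k ≤ Q := Nat.sqrt_le Q
  have hk2 : Q < (k + 1) * (k + 1) := Nat.lt_succ_sqrt Q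
  have habs : ∀ x : ℤ, x ^ 2 ≤ (Q : ℤ) → x ∈ Finset.Icc (-(k : ℤ)) k := by
    intro x hx
    have : ((Q : ℕ) : ℤ) < ((k : ℤ) + 1) * (k + 1) := by exact_mod_cast hk2
    rw [Finset.mem_Icc]
    constructor <;> nlinarith
  have hsub : T ⊆ ((Finset.Icc (-(k : ℤ)) k ×ˢ Finset.Icc (-(k : ℤ)) k ×ˢ
      Finset.Icc (-(k : ℤ)) k).filter
        (fun m => m.1 ^ 2 + m.2.1 ^ 2 ≤ (Q : ℤ))).erase 0 := by
    intro m hm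
    have := h1 m hm
    simp only [Finset.mem_erase, Finset.mem_filter, Finset.mem_product]
    exact ⟨h0 m hm, ⟨habs _ (by nlinarith [sq_nonneg m.2.1]),
      habs _ (by nlinarith [sq_nonneg m.1]), habs _ (h2 m hm)⟩, this⟩
  have hcard := Finset.card_le_card hsub
  have hcube : T.card ≤ (2 * k + 1) ^ 3 - 1 := by
    have e : ((Finset.Icc (-(k : ℤ)) k ×ˢ Finset.Icc (-(k : ℤ)) k ×ˢ
      Finset.Icc (-(k : ℤ)) k).erase 0).card = (2 * k + 1) ^ 3 - 1 := by
      rw [Finset.card_erase_of_mem (by simp)]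
      simp only [Finset.card_product, Int.card_Icc]
      have : ((k : ℤ) + 1 - -(k : ℤ)).toNat = 2 * k + 1 := by omega
      rw [this]
      congr 1
      ring
    rw [← e]
    refine hcard.trans (Finset.card_le_card ?_)
    exact Finset.erase_subset_erase _ (Finset.filter_subset _ _)
  by_cases hk3 : 3 ≤ k
  · have a1 : T.card ≤ 14 * k ^ 3 := by
      refine hcube.trans ?_
      rw [Nat.sub_le_iff_le_add]
      clear_value k; obtain ⟨j, rfl⟩ : ∃ j, k = j + 3 := ⟨k - 3, by omega⟩
      ring_nf
      nlinarith [Nat.zero_le (j ^ 3), Nat.zero_le (j ^ 2)]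
    calc T.card ^ 2 ≤ (14 * k ^ 3) ^ 2 := Nat.pow_le_pow_left a1 2
      _ = 196 * (k * k) ^ 3 := by ring
      _ ≤ 196 * Q ^ 3 := Nat.mul_le_mul_left _ (Nat.pow_le_pow_left hk1 3)
  · have hk0 : 1 ≤ k := by
      rw [hk]; exact Nat.sqrt_pos.2 hQ
    clear_value k
    obtain rfl | rfl : k = 1 ∨ k = 2 := by omega
    · by_cases hq : Q = 1
      · subst hq
        have : T.card ≤ 14 := hcard.trans (by decide +kernel)
        nlinarith
      · have q2 : 2 ^ 3 ≤ Q ^ 3 := Nat.pow_le_pow_left (by omega) 3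
        norm_num at hcube
        nlinarith
    · by_cases hq : Q = 4
      · subst hq
        have : T.card ≤ 64 := hcard.trans (by decide +kernel)
        nlinarith
      · have q2 : 5 ^ 3 ≤ Q ^ 3 := Nat.pow_le_pow_left (by omega) 3
        norm_num at hcube
        nlinarith

lemma count_real (t : ℝ) (ht : 1 ≤ t) (T : Finset (ℤ × ℤ × ℤ))
    (h0 : ∀ m ∈ T, m ≠ 0)
    (h1 : ∀ m ∈ T, (m.1 : ℝ) ^ 2 + (m.2.1 : ℝ) ^ 2 ≤ t ^ 2)
    (h2 : ∀ m ∈ T, (m.2.2 : ℝ) ^ 2 ≤ t ^ 2) :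
    (T.card : ℝ) ≤ 14 * t ^ 3 := by
  have key : ∀ z : ℤ, (z : ℝ) ≤ t ^ 2 → z ≤ ((⌊t ^ 2⌋₊ : ℕ) : ℤ) := by
    intro z hz
    rw [Int.natCast_floor_eq_floor (by positivity)]
    exact Int.le_floor.2 hz
  have hc := count_int ⌊t ^ 2⌋₊ (by
      rw [Nat.one_le_floor_iff]; exact one_le_pow₀ ht) T h0
    (fun m hm => key _ (by push_cast; exact h1 m hm))
    (fun m hm => key _ (by push_cast; exact h2 m hm))
  have hc' : (T.card : ℝ) ^ 2 ≤ 196 * (⌊t ^ 2⌋₊ : ℝ) ^ 3 := by exact_mod_cast hc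
  have hf : (⌊t ^ 2⌋₊ : ℝ) ^ 3 ≤ (t ^ 2) ^ 3 :=
    pow_le_pow_left₀ (by positivity) (Nat.floor_le (by positivity)) 3
  refine (pow_le_pow_iff_left₀ (by positivity) (by positivity) two_ne_zero).1 ?_
  nlinarith

/-- For `a > 0`, `g*(m) := max(√(a(m₁²+m₂²)), |m₃|/a)` and `g₀ := min(√a, 1/a)`, one has,
for every `Z > 0`,
`∑_{0 < g*(m) ≤ Z} g*(m)⁻³ ≤ (42/g₀³)·log₊(1.4 Z/g₀)` with `log₊ = max(log, 0)`. -/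
theorem sum_gstar_inv_cube_le (a : ℝ) (ha : 0 < a) (Z : ℝ) (hZ : 0 < Z)
    (gs : ℤ × ℤ × ℤ → ℝ)
    (hgs : ∀ m : ℤ × ℤ × ℤ,
      gs m = max (Real.sqrt (a * ((m.1 : ℝ) ^ 2 + (m.2.1 : ℝ) ^ 2))) (|(m.2.2 : ℝ)| / a))
    (g₀ : ℝ) (hg₀ : g₀ = min (Real.sqrt a) (1 / a)) :
    (∑' m : {m : ℤ × ℤ × ℤ // 0 < gs m ∧ gs m ≤ Z}, (gs (m : ℤ × ℤ × ℤ)) ^ (-(3 : ℤ)))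
      ≤ 42 / g₀ ^ 3 * max (Real.log (1.4 * Z / g₀)) 0 := by
  classical
  have hsa : 0 < Real.sqrt a := Real.sqrt_pos.2 ha
  have hg : 0 < g₀ := by rw [hg₀]; exact lt_min hsa (by positivity)
  have hga : g₀ ≤ Real.sqrt a := hg₀ ▸ min_le_left _ _
  have hgi : g₀ ≤ 1 / a := hg₀ ▸ min_le_right _ _
  have hga2 : g₀ ^ 2 ≤ a := by
    have := pow_le_pow_left₀ hg.le hga 2
    rwa [Real.sq_sqrt ha.le] at this
  -- coordinate bounds
  have hx : ∀ m, (m.1 : ℝ) ^ 2 + (m.2.1 : ℝ) ^ 2 ≤ (gs m / g₀) ^ 2 := by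
    intro m
    have e : Real.sqrt (a * ((m.1 : ℝ) ^ 2 + (m.2.1 : ℝ) ^ 2)) ≤ gs m := by
      rw [hgs]; exact le_max_left _ _
    have e2 := pow_le_pow_left₀ (Real.sqrt_nonneg _) e 2
    rw [Real.sq_sqrt (by positivity)] at e2
    rw [div_pow, le_div_iff₀ (by positivity)]
    have : 0 ≤ (m.1 : ℝ) ^ 2 + (m.2.1 : ℝ) ^ 2 := by positivity
    nlinarith
  have hz : ∀ m, (m.2.2 : ℝ) ^ 2 ≤ (gs m / g₀) ^ 2 := by
    intro m
    have e : |(m.2.2 : ℝ)| / a ≤ gs m := by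
      rw [hgs]; exact le_max_right _ _
    have e2 : |(m.2.2 : ℝ)| ≤ gs m / g₀ := by
      rw [le_div_iff₀ hg]
      refine le_trans ?_ e
      rw [div_eq_mul_one_div]
      exact mul_le_mul_of_nonneg_left hgi (abs_nonneg _)
    rw [← sq_abs (m.2.2 : ℝ)]
    exact pow_le_pow_left₀ (abs_nonneg _) e2 2
  have hne : ∀ m, 0 < gs m → m ≠ 0 := by
    rintro m hm rfl
    rw [hgs] at hm
    simp at hm
  have hone : ∀ m, 0 < gs m → 1 ≤ gs m / g₀ := by
    intro m hm
    by_contra! hlt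
    have hp : 0 < gs m / g₀ := by positivity
    have hlt2 : (gs m / g₀) ^ 2 < 1 := by nlinarith
    have b1 := (hx m).trans_lt hlt2
    have b2 := (hz m).trans_lt hlt2
    have c1 : m.1 ^ 2 + m.2.1 ^ 2 < 1 := by exact_mod_cast b1
    have c2 : m.2.2 ^ 2 < 1 := by exact_mod_cast b2
    apply hne m hm
    have d1 : m.1 = 0 := by
      have : m.1 ^ 2 = 0 := by nlinarith [sq_nonneg m.1, sq_nonneg m.2.1]
      simpa using this
    have d2 : m.2.1 = 0 := by
      have : m.2.1 ^ 2 = 0 := by nlinarith [sq_nonneg m.1, sq_nonneg m.2.1]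
      simpa using this
    have d3 : m.2.2 = 0 := by
      have : m.2.2 ^ 2 = 0 := by nlinarith [sq_nonneg m.2.2]
      simpa using this
    exact Prod.ext d1 (Prod.ext d2 d3)
  have hR : 0 ≤ 42 / g₀ ^ 3 * max (Real.log (1.4 * Z / g₀)) 0 :=
    mul_nonneg (by positivity) (le_max_right _ _)
  refine Real.tsum_le_of_sum_le (fun m => zpow_nonneg m.2.1.le _) ?_
  intro s
  set T : Finset (ℤ × ℤ × ℤ) := s.map (Function.Embedding.subtype _) with hT
  have hTm : ∀ m ∈ T, 0 < gs m ∧ gs m ≤ Z := by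
    intro m hm
    rw [hT, Finset.mem_map] at hm
    obtain ⟨x, _, rfl⟩ := hm
    exact x.2
  have hsum : ∑ m ∈ s, (gs (m : ℤ × ℤ × ℤ)) ^ (-(3 : ℤ))
      = (1 / g₀ ^ 3) * ∑ m ∈ T, ((gs m / g₀) ^ 3)⁻¹ := by
    rw [hT, Finset.sum_map, Finset.mul_sum]
    refine Finset.sum_congr rfl fun m _ => ?_
    have := m.2.1
    simp only [Function.Embedding.subtype_apply]
    rw [zpow_neg]
    field_simp
  rw [hsum]
  rcases T.eq_empty_or_nonempty with he | ⟨m₀, hm₀⟩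
  · rw [he]; simpa using hR
  obtain ⟨A, B⟩ := abel_aux (fun m => gs m / g₀) T (fun m hm => hone m (hTm m hm).1) (by
    intro m hm
    refine count_real _ (hone m (hTm m hm).1) _ ?_ ?_ ?_
    · intro x hx'
      exact hne x (hTm x (Finset.mem_filter.1 hx').1).1
    · intro x hx'
      obtain ⟨u, v⟩ := Finset.mem_filter.1 hx'
      exact (hx x).trans (pow_le_pow_left₀ (zero_le_one.trans (hone x (hTm x u).1)) v 2)
    · intro x hx'
      obtain ⟨u, v⟩ := Finset.mem_filter.1 hx'
      exact (hz x).trans (pow_le_pow_left₀ (zero_le_one.trans (hone x (hTm x u).1)) v 2))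
  set W := Z / g₀ with hW
  have hle : ∀ m ∈ T, gs m / g₀ ≤ W := fun m hm =>
    div_le_div_of_nonneg_right (hTm m hm).2 hg.le
  have hW1 : 1 ≤ W := (hone m₀ (hTm m₀ hm₀).1).trans (hle m₀ hm₀)
  have hcard : (T.card : ℝ) ≤ 14 * W ^ 3 := by
    refine count_real W hW1 T (fun m hm => hne m (hTm m hm).1) ?_ ?_
    · intro x u
      exact (hx x).trans (pow_le_pow_left₀ (zero_le_one.trans (hone x (hTm x u).1)) (hle x u) 2)
    · intro x u
      exact (hz x).trans (pow_le_pow_left₀ (zero_le_one.trans (hone x (hTm x u).1)) (hle x u) 2)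
  have hlogW : 0 ≤ Real.log W := Real.log_nonneg hW1
  have hS : ∑ m ∈ T, ((gs m / g₀) ^ 3)⁻¹ ≤ 14 + 42 * Real.log W := by
    rcases le_or_gt 14 T.card with h | h
    · refine (B h).trans ?_
      have hp : (0 : ℝ) < T.card := by exact_mod_cast (by omega : 0 < T.card)
      have : Real.log (T.card / 14) ≤ Real.log (W ^ 3) :=
        Real.log_le_log (by positivity) (by linarith)
      rw [Real.log_pow] at this
      push_cast at this
      linarith
    · have : (T.card : ℝ) ≤ 14 := by exact_mod_cast h.le
      linarith
  have h14 : (1 : ℝ) / 3 ≤ Real.log 1.4 := by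
    have h3 : (1 : ℝ) ≤ Real.log (1.4 ^ 3) := by
      rw [Real.le_log_iff_exp_le (by norm_num)]
      have := Real.exp_one_lt_d9
      norm_num at this ⊢
      linarith
    rw [Real.log_pow] at h3
    push_cast at h3
    linarith
  have hlog : Real.log (1.4 * Z / g₀) = Real.log 1.4 + Real.log W := by
    rw [← Real.log_mul (by norm_num) (by positivity), hW, mul_div_assoc]
  have hfin : ∑ m ∈ T, ((gs m / g₀) ^ 3)⁻¹ ≤ 42 * max (Real.log (1.4 * Z / g₀)) 0 := by
    have := le_max_left (Real.log (1.4 * Z / g₀)) 0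
    rw [hlog] at this ⊢
    linarith
  calc (1 / g₀ ^ 3) * ∑ m ∈ T, ((gs m / g₀) ^ 3)⁻¹
      ≤ (1 / g₀ ^ 3) * (42 * max (Real.log (1.4 * Z / g₀)) 0) :=
        mul_le_mul_of_nonneg_left hfin (by positivity)
    _ = _ := by ring
end

section
/- Let a > 0, and for m = (m₁,m₂,m₃) ∈ ℤ³ set g*(m) := max(√(a(m₁² + m₂²)), |m₃|/a), and g₀ := min(√a, 1/a). Then for all reals Z > 0 and α > 3, the series Σ_{m ∈ ℤ³, g*(m) > Z} (g*(m))^{−α} converges and is at most (14α/((α−3)·g₀³))·Z^{3−α}. -/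
open MeasureTheory Set

lemma cardA : ((((Finset.Icc (-1:ℤ) 1) ×ˢ (Finset.Icc (-1:ℤ) 1) ×ˢ (Finset.Icc (-1:ℤ) 1)).filter
    (fun m => m.1 ^ 2 + m.2.1 ^ 2 ≤ 1)).erase 0).card = 14 := by rfl

lemma cardB : (((Finset.Icc (-2:ℤ) 2) ×ˢ (Finset.Icc (-2:ℤ) 2) ×ˢ (Finset.Icc (-2:ℤ) 2)).filter
    (fun m => m.1 ^ 2 + m.2.1 ^ 2 ≤ 7)).card = 105 := by rfl

lemma card_box (k : ℕ) : (((Finset.Icc (-k:ℤ) k) ×ˢ (Finset.Icc (-k:ℤ) k) ×ˢ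
    (Finset.Icc (-k:ℤ) k)).erase 0).card = (2 * k + 1) ^ 3 - 1 := by
  rw [Finset.card_erase_of_mem (by simp [Finset.mem_product])]
  simp only [Finset.card_product, Int.card_Icc]
  have : ((k:ℤ) + 1 - -k).toNat = 2 * k + 1 := by omega
  rw [this]; ring_nf

lemma count_le (F : Finset (ℤ × ℤ × ℤ)) (s : ℝ) (hs : 0 < s)
    (hF : ∀ m ∈ F, m ≠ 0 ∧ (m.1 : ℝ) ^ 2 + (m.2.1 : ℝ) ^ 2 ≤ s ^ 2 ∧ |(m.2.2 : ℝ)| ≤ s) :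
    (F.card : ℝ) ≤ 14 * s ^ 3 := by
  obtain ⟨k, hk⟩ : ∃ k : ℕ, k = ⌊s⌋₊ := ⟨_, rfl⟩
  have hks : (k : ℝ) ≤ s := hk ▸ Nat.floor_le hs.le
  have hsk : s < k + 1 := hk ▸ Nat.lt_floor_add_one s
  have key : ∀ x : ℤ, |(x : ℝ)| ≤ s → x ∈ Finset.Icc (-k : ℤ) k := by
    intro x hx
    have h1 : ((|x| : ℤ) : ℝ) < ((k + 1 : ℤ) : ℝ) := by push_cast; linarith
    have h2 : |x| < (k : ℤ) + 1 := by exact_mod_cast h1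
    rw [Finset.mem_Icc]
    exact abs_le.mp (by omega)
  have hbox : ∀ m ∈ F, m ∈ (Finset.Icc (-k:ℤ) k) ×ˢ (Finset.Icc (-k:ℤ) k) ×ˢ
      (Finset.Icc (-k:ℤ) k) := by
    intro m hm
    obtain ⟨-, h2, h3⟩ := hF m hm
    simp only [Finset.mem_product]
    refine ⟨key _ (abs_le_of_sq_le_sq (by nlinarith [sq_nonneg (m.2.1 : ℝ)]) hs.le),
      key _ (abs_le_of_sq_le_sq (by nlinarith [sq_nonneg (m.1 : ℝ)]) hs.le), key _ h3⟩
  have hsub : F ⊆ ((Finset.Icc (-k:ℤ) k) ×ˢ (Finset.Icc (-k:ℤ) k) ×ˢ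
      (Finset.Icc (-k:ℤ) k)).erase 0 := fun m hm =>
    Finset.mem_erase.mpr ⟨(hF m hm).1, hbox m hm⟩
  have hc := Finset.card_le_card hsub
  rw [card_box] at hc
  have hk3 : (k : ℝ) ^ 3 ≤ s ^ 3 := by gcongr
  have hsq : ∀ n : ℕ, s ^ 2 < n + 1 → ∀ m ∈ F, m.1 ^ 2 + m.2.1 ^ 2 ≤ (n : ℤ) := by
    intro n hn m hm
    have h : ((m.1 ^ 2 + m.2.1 ^ 2 : ℤ) : ℝ) < ((n + 1 : ℤ) : ℝ) := by
      push_cast; linarith [(hF m hm).2.1]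
    have h' : m.1 ^ 2 + m.2.1 ^ 2 < (n : ℤ) + 1 := by exact_mod_cast h
    omega
  rcases Nat.lt_or_ge k 3 with h3 | h3
  · interval_cases k
    · have : F.card = 0 := by omega
      rw [this]; push_cast; positivity
    · by_cases h2 : s ^ 2 < 2
      · have hc' : F.card ≤ 14 := by
          rw [← cardA]
          refine Finset.card_le_card fun m hm => ?_
          rw [Finset.mem_erase, Finset.mem_filter]
          exact ⟨(hF m hm).1, hbox m hm, hsq 1 (by norm_num; linarith) m hm⟩
        have : (F.card : ℝ) ≤ 14 := by exact_mod_cast hc'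
        norm_num at hk3
        linarith
      · have : (F.card : ℝ) ≤ 26 := by exact_mod_cast hc
        push_cast at *
        have : (1.4:ℝ) ≤ s := by nlinarith
        nlinarith
    · by_cases h2 : s ^ 2 < 8
      · have hc' : F.card ≤ 105 := by
          rw [← cardB]
          refine Finset.card_le_card fun m hm => ?_
          rw [Finset.mem_filter]
          exact ⟨hbox m hm, hsq 7 (by norm_num; linarith) m hm⟩
        have : (F.card : ℝ) ≤ 105 := by exact_mod_cast hc'
        norm_num at hk3
        linarith
      · have : (F.card : ℝ) ≤ 124 := by exact_mod_cast hc
        push_cast at *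
        nlinarith
  · have h1 : (F.card : ℝ) ≤ (2 * k + 1) ^ 3 := by
      exact_mod_cast hc.trans (Nat.sub_le _ _)
    have h4 : (3 : ℝ) ≤ k := by exact_mod_cast h3
    have h5 : (2 * (k:ℝ) + 1) ^ 3 ≤ (7 / 3 * k) ^ 3 := by
      gcongr; linarith
    have : (0:ℝ) ≤ (k:ℝ)^3 := by positivity
    nlinarith


/-- For `a > 0`, `g*(m) := max(√(a(m₁²+m₂²)), |m₃|/a)` and `g₀ := min(√a, 1/a)`, one has,
for all reals `Z > 0` and `α > 3`, that `∑_{g*(m) > Z} g*(m)^{−α}` converges and is at most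
`(14α/((α−3)g₀³))·Z^{3−α}`. -/
theorem sum_gstar_rpow_le (a : ℝ) (ha : 0 < a) (Z α : ℝ) (hZ : 0 < Z) (hα : 3 < α)
    (gs : ℤ × ℤ × ℤ → ℝ)
    (hgs : ∀ m : ℤ × ℤ × ℤ,
      gs m = max (Real.sqrt (a * ((m.1 : ℝ) ^ 2 + (m.2.1 : ℝ) ^ 2))) (|(m.2.2 : ℝ)| / a))
    (g₀ : ℝ) (hg₀ : g₀ = min (Real.sqrt a) (1 / a)) :
    Summable (fun m : {m : ℤ × ℤ × ℤ // Z < gs m} => (gs (m : ℤ × ℤ × ℤ)) ^ (-α)) ∧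
      (∑' m : {m : ℤ × ℤ × ℤ // Z < gs m}, (gs (m : ℤ × ℤ × ℤ)) ^ (-α))
        ≤ 14 * α / ((α - 3) * g₀ ^ 3) * Z ^ (3 - α) := by
  have hsa : 0 < Real.sqrt a := Real.sqrt_pos.mpr ha
  have hg0 : 0 < g₀ := by rw [hg₀]; exact lt_min hsa (by positivity)
  have hg1 : g₀ ≤ Real.sqrt a := hg₀ ▸ min_le_left _ _
  have hg2 : g₀ ≤ 1 / a := hg₀ ▸ min_le_right _ _
  -- the counting bound
  have hcount : ∀ (F : Finset {m : ℤ × ℤ × ℤ // Z < gs m}) (t : ℝ), 0 < t →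
      (((F.filter (fun m : {m : ℤ × ℤ × ℤ // Z < gs m} => gs (m : ℤ × ℤ × ℤ) < t)).card : ℕ) : ℝ) ≤ 14 * (t / g₀) ^ 3 := by
    intro F t ht
    rw [← Finset.card_map (Function.Embedding.subtype _)]
    refine count_le _ _ (by positivity) fun m hm => ?_
    simp only [Finset.mem_map, Finset.mem_filter, Function.Embedding.coe_subtype] at hm
    obtain ⟨⟨m, hmZ⟩, ⟨-, hmt⟩, rfl⟩ := hm
    simp only at hmt ⊢
    rw [hgs, max_lt_iff] at hmt
    refine ⟨?_, ?_, ?_⟩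
    · rintro rfl
      rw [hgs] at hmZ
      simp at hmZ
      linarith
    · have h1 := hmt.1
      rw [Real.sqrt_lt' ht] at h1
      have hg : g₀ ^ 2 ≤ a := by
        calc g₀ ^ 2 ≤ Real.sqrt a ^ 2 := by gcongr
          _ = a := Real.sq_sqrt ha.le
      rw [div_pow, le_div_iff₀ (by positivity)]
      have : 0 ≤ (m.1 : ℝ) ^ 2 + (m.2.1 : ℝ) ^ 2 := by positivity
      nlinarith
    · rw [le_div_iff₀ hg0]
      calc |(m.2.2 : ℝ)| * g₀ ≤ |(m.2.2 : ℝ)| * (1 / a) := by gcongr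
        _ = |(m.2.2 : ℝ)| / a := by ring
        _ ≤ t := hmt.2.le
  have hfin : ∀ F : Finset {m : ℤ × ℤ × ℤ // Z < gs m},
      ∑ m ∈ F, (gs (m : ℤ × ℤ × ℤ)) ^ (-α) ≤ 14 * α / ((α - 3) * g₀ ^ 3) * Z ^ (3 - α) := by
    intro F
    have hint : IntegrableOn (fun t : ℝ => α * t ^ (-α - 1)) (Ioi Z) :=
      (integrableOn_Ioi_rpow_of_lt (by linarith) hZ).const_mul _
    have hrep : ∀ m ∈ F, (gs (m : ℤ × ℤ × ℤ)) ^ (-α) =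
        ∫ t in Ioi Z, (Ioi (gs m)).indicator (fun t : ℝ => α * t ^ (-α - 1)) t := by
      intro m _
      rw [setIntegral_indicator measurableSet_Ioi, Ioi_inter_Ioi, sup_eq_right.mpr m.2.le,
        integral_const_mul, integral_Ioi_rpow_of_lt (by linarith) (hZ.trans m.2)]
      have : -α - 1 + 1 = -α := by ring
      rw [this]
      field_simp
    rw [Finset.sum_congr rfl hrep, ← integral_finsetSum _
      (fun m _ => hint.indicator measurableSet_Ioi)]
    have hR : 14 * α / ((α - 3) * g₀ ^ 3) * Z ^ (3 - α) =
        ∫ t in Ioi Z, (14 * α / g₀ ^ 3) * t ^ (2 - α) := by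
      rw [integral_const_mul, integral_Ioi_rpow_of_lt (by linarith) hZ]
      have h1 : 2 - α + 1 = 3 - α := by ring
      have h2 : α - 3 ≠ 0 := by linarith
      have h3 : 3 - α ≠ 0 := by linarith
      rw [h1, show 3 - α = -(α - 3) by ring]
      field_simp
    rw [hR]
    refine setIntegral_mono_on (integrable_finsetSum _
      (fun m _ => hint.indicator measurableSet_Ioi))
      ((integrableOn_Ioi_rpow_of_lt (by linarith) hZ).const_mul _) measurableSet_Ioi ?_
    intro t ht
    have ht0 : 0 < t := hZ.trans ht
    have e : ∑ m ∈ F, (Ioi (gs m)).indicator (fun t : ℝ => α * t ^ (-α - 1)) t =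
        ((F.filter (fun m : {m : ℤ × ℤ × ℤ // Z < gs m} => gs (m : ℤ × ℤ × ℤ) < t)).card : ℝ) * (α * t ^ (-α - 1)) := by
      simp only [indicator_apply, mem_Ioi]
      rw [← Finset.sum_filter, Finset.sum_const, nsmul_eq_mul]
    rw [e]
    have hp : t ^ (2 - α) = t ^ 3 * t ^ (-α - 1) := by
      rw [← Real.rpow_natCast t 3, ← Real.rpow_add ht0]
      congr 1; push_cast; ring
    have hα0 : 0 < α := by linarith
    calc _ ≤ (14 * (t / g₀) ^ 3) * (α * t ^ (-α - 1)) := by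
          gcongr
          exact hcount F t ht0
      _ = _ := by rw [hp]; field_simp
  have hnn : ∀ m : {m : ℤ × ℤ × ℤ // Z < gs m}, 0 ≤ (gs (m : ℤ × ℤ × ℤ)) ^ (-α) := fun m =>
    Real.rpow_nonneg (hZ.trans m.2).le _
  have hS := summable_of_sum_le hnn hfin
  exact ⟨hS, hS.tsum_le_of_sum_le hfin⟩
end

section
/- Let x, y be real numbers with 0 < y ≤ x/3 and let u = y or u = −y. Then |(16π/105)·((x+2u)^{7/2} − 2(x+u)^{7/2} + x^{7/2})/y² − (4π/3)·x^{3/2}| ≤ 8.4·x^{1/2}·y. -/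
open Real

lemma aux_sq (s : ℝ) (hs : -(2/3) ≤ s) :
    0 ≤ (1 + s) ^ ((7 : ℝ) / 2) ∧ ((1 + s) ^ ((7 : ℝ) / 2)) ^ 2 = (1 + s) ^ 7 := by
  have h : 0 ≤ 1 + s := by linarith
  refine ⟨by positivity, ?_⟩
  rw [← Real.rpow_natCast, ← Real.rpow_mul h, ← Real.rpow_natCast]
  norm_num

lemma aux_upper (s : ℝ) (hs : -(2/3) ≤ s) :
    (1 + s) ^ ((7 : ℝ) / 2) ≤ 1 + 7/2*s + 35/8*s^2 + 35/16*s^3 + 1/2*s^4 := by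
  obtain ⟨h0, h2⟩ := aux_sq s hs
  obtain ⟨t, rfl⟩ : ∃ t, s = t - 2/3 := ⟨s + 2/3, by ring⟩
  have ht : 0 ≤ t := by linarith
  have h3 : 0 ≤ t ^ 3 := by positivity
  have h4 : 0 ≤ t ^ 4 := by positivity
  have hp : 0 ≤ 1 + 7/2*(t-2/3) + 35/8*(t-2/3)^2 + 35/16*(t-2/3)^3 + 1/2*(t-2/3)^4 := by
    nlinarith [sq_nonneg (t - 1/50)]
  refine le_of_sq_le_sq ?_ hp
  rw [h2]
  have hq : 0 ≤ 29/64 + 105/64*(t-2/3) + 553/256*(t-2/3)^2 + 19/16*(t-2/3)^3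
      + 1/4*(t-2/3)^4 := by
    nlinarith [sq_nonneg t]
  have := mul_nonneg (show 0 ≤ (t-2/3)^4 by positivity) hq
  linarith

lemma aux_lower (s : ℝ) (hs : -(2/3) ≤ s) :
    1 + 7/2*s + 35/8*s^2 + 35/16*s^3 ≤ (1 + s) ^ ((7 : ℝ) / 2) := by
  obtain ⟨h0, h2⟩ := aux_sq s hs
  by_cases hT : 1 + 7/2*s + 35/8*s^2 + 35/16*s^3 ≤ 0
  · linarith
  push Not at hT
  have hs2 : -(62/100) ≤ s := by
    by_contra! h
    nlinarith [mul_pos (show 0 < -(62/100) - s by linarith) (show 0 < 1 + s by linarith),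
      mul_nonneg (show 0 ≤ -(62/100) - s by linarith) (sq_nonneg (s + 2/3))]
  refine le_of_sq_le_sq ?_ h0
  rw [h2]
  have hq : 0 ≤ 35/64 + 119/64*s + 567/256*s^2 + s^3 := by
    nlinarith [mul_nonneg (show 0 ≤ s + 62/100 by linarith) (sq_nonneg (s + 3/4)),
      mul_nonneg (show 0 ≤ s + 62/100 by linarith) (sq_nonneg (s + 797/1000))]
  have := mul_nonneg (show 0 ≤ s^4 by positivity) hq
  linarith

lemma aux_main (r w : ℝ) (hw : 0 < w) (hw3 : w ≤ 1/3) (hr : r = w ∨ r = -w) :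
    |4/35 * ((1 + 2*r) ^ ((7 : ℝ) / 2) - 2 * (1 + r) ^ ((7 : ℝ) / 2) + 1) - w^2| ≤ 2 * w^3 := by
  have hw4 : w^4 ≤ w^3 * (1/3) := by
    rw [pow_succ w 3]; gcongr
  have hb : -(1/3) ≤ r := by rcases hr with h | h <;> linarith
  have a1 := aux_upper r (by linarith)
  have a2 := aux_lower r (by linarith)
  have a3 := aux_upper (2*r) (by linarith)
  have a4 := aux_lower (2*r) (by linarith)
  have h3 : 0 < w^3 := by positivity
  rw [abs_le]
  rcases hr with rfl | rfl <;> constructor <;> ring_nf at * <;> linarith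

theorem volume_second_difference_estimate (x y u : ℝ) (hy : 0 < y) (hyx : y ≤ x / 3)
    (hu : u = y ∨ u = -y) :
    |(16 * π / 105) * ((x + 2 * u) ^ ((7 : ℝ) / 2) - 2 * (x + u) ^ ((7 : ℝ) / 2)
        + x ^ ((7 : ℝ) / 2)) / y ^ 2 - (4 * π / 3) * x ^ ((3 : ℝ) / 2)|
      ≤ 8.4 * x ^ ((1 : ℝ) / 2) * y := by
  have hx : 0 < x := by linarith
  obtain ⟨w, rfl⟩ : ∃ w, y = x * w := ⟨y / x, by field_simp⟩
  obtain ⟨r, rfl⟩ : ∃ r, u = x * r := ⟨u / x, by field_simp⟩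
  have hw : 0 < w := pos_of_mul_pos_right hy hx.le
  have hw3 : w ≤ 1/3 := by
    by_contra! h
    nlinarith
  have hr : r = w ∨ r = -w := by
    rcases hu with h | h
    · left; exact mul_left_cancel₀ hx.ne' h
    · right; apply mul_left_cancel₀ hx.ne'; linarith
  have hb : -(1/3) ≤ r := by rcases hr with h | h <;> linarith
  have key := aux_main r w hw hw3 hr
  have e1 : x + 2 * (x * r) = x * (1 + 2 * r) := by ring
  have e2 : x + x * r = x * (1 + r) := by ring
  have p7 : x ^ ((7 : ℝ) / 2) = x ^ 3 * x ^ ((1 : ℝ) / 2) := by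
    rw [← Real.rpow_natCast, ← Real.rpow_add hx]; norm_num
  have p3 : x ^ ((3 : ℝ) / 2) = x * x ^ ((1 : ℝ) / 2) := by
    nth_rewrite 2 [← Real.rpow_one x]
    rw [← Real.rpow_add hx]; norm_num
  rw [e1, e2, Real.mul_rpow hx.le (by linarith), Real.mul_rpow hx.le (by linarith), p7, p3]
  have hz : 0 < x ^ ((1 : ℝ) / 2) := by positivity
  generalize x ^ ((1 : ℝ) / 2) = z at *
  generalize (1 + 2 * r) ^ ((7 : ℝ) / 2) = A at *
  generalize (1 + r) ^ ((7 : ℝ) / 2) = B at *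
  have e : (16 * π / 105) * (x ^ 3 * z * A - 2 * (x ^ 3 * z * B) + x ^ 3 * z) / (x * w) ^ 2
      - (4 * π / 3) * (x * z)
      = (4 * π / 3 * x * z / w ^ 2) * (4/35 * (A - 2 * B + 1) - w^2) := by
    field_simp
    ring
  rw [e, abs_mul, abs_of_pos (by positivity)]
  calc _ ≤ (4 * π / 3 * x * z / w ^ 2) * (2 * w^3) := by gcongr
    _ = (8 / 3 * π) * (z * (x * w)) := by field_simp; ring
    _ ≤ 8.4 * (z * (x * w)) := by
      gcongr
      have := Real.pi_lt_d2
      norm_num at *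
      linarith
    _ = _ := by ring
end

section
/- Let a > 0, t > 0, and let m = (m₁,m₂,m₃) ∈ ℤ³ be nonzero. Set g(m) := √(a(m₁² + m₂²) + m₃²/a²). Then the Fourier integral I(m,t) := ∫_{{u ∈ ℝ³ : (u₁²+u₂²)/a + a²u₃² ≤ t}} e^{2πi(m₁u₁ + m₂u₂ + m₃u₃)} du equals −(√t/(π·g(m)²))·cos(2π·g(m)·√t) + sin(2π·g(m)·√t)/(2π²·g(m)³). -/
open MeasureTheory Real

lemma aux_e : ∃ e : (Fin 3 → ℝ) ≃ᵐ ℝ × ℝ × ℝ, MeasurePreserving e ∧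
    ∀ x, e x = (x 0, x 1, x 2) := by
  refine ⟨(MeasurableEquiv.piFinSuccAbove (fun _ => ℝ) 0).trans
    (MeasurableEquiv.prodCongr (MeasurableEquiv.refl ℝ) MeasurableEquiv.finTwoArrow), ?_, ?_⟩
  · have h1 := MeasurePreserving.prod (MeasurePreserving.id (volume : Measure ℝ))
      (volume_preserving_finTwoArrow ℝ)
    have h2 := volume_preserving_piFinSuccAbove (fun _ : Fin 3 => ℝ) 0
    exact h1.comp h2
  · intro x
    rfl

lemma aux_diag (d : Fin 3 → ℝ) (hd : d 0 * d 1 * d 2 = 1) :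
    MeasurePreserving (fun x : Fin 3 → ℝ => fun i => d i * x i) ∧
    MeasurableEmbedding (fun x : Fin 3 → ℝ => fun i => d i * x i) := by
  have h0 : ∀ i, d i ≠ 0 := by
    intro i hi
    fin_cases i <;> simp_all
  have hdet : (Matrix.diagonal d).det = 1 := by
    rw [Matrix.det_diagonal, Fin.prod_univ_three, hd]
  have key := Real.smul_map_diagonal_volume_pi (D := d) (by rw [hdet]; exact one_ne_zero)
  have hfun : (fun x : Fin 3 → ℝ => fun i => d i * x i) = Matrix.toLin' (Matrix.diagonal d) := by
    funext x i
    simp [Matrix.mulVec_diagonal]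
  refine ⟨⟨by fun_prop, ?_⟩, ?_⟩
  · rw [hdet] at key
    rw [hfun]
    simpa using key
  · let E : (Fin 3 → ℝ) ≃ᵐ (Fin 3 → ℝ) :=
      { toFun := fun x i => d i * x i
        invFun := fun x i => (d i)⁻¹ * x i
        left_inv := fun x => by funext i; simp [h0 i]
        right_inv := fun x => by funext i; simp [h0 i]
        measurable_toFun := by
          change Measurable (fun (x : Fin 3 → ℝ) i => d i * x i); fun_prop
        measurable_invFun := by
          change Measurable (fun (x : Fin 3 → ℝ) i => (d i)⁻¹ * x i); fun_prop }
    exact E.measurableEmbedding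

lemma aux_rot (n : Fin 3 → ℝ) (hn : n 0 ^ 2 + n 1 ^ 2 + n 2 ^ 2 = 1) :
    ∃ e : (Fin 3 → ℝ) ≃ᵐ (Fin 3 → ℝ), MeasurePreserving e ∧
      (∀ x, (e x 0) ^ 2 + (e x 1) ^ 2 + (e x 2) ^ 2 = x 0 ^ 2 + x 1 ^ 2 + x 2 ^ 2) ∧
      (∀ x, n 0 * e x 0 + n 1 * e x 1 + n 2 * e x 2 = x 0) := by
  let v : Fin 3 → EuclideanSpace ℝ (Fin 3) := fun _ => WithLp.toLp 2 n
  have hv : Orthonormal ℝ (({0} : Set (Fin 3)).domRestrict v) := by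
    constructor
    · intro i
      have : ‖WithLp.toLp 2 n‖ = 1 := by
        rw [EuclideanSpace.norm_eq, Fin.sum_univ_three]
        simp [hn]
      exact this
    · intro i j hij
      exact absurd (Subsingleton.elim i j) hij
  obtain ⟨b, hb⟩ := hv.exists_orthonormalBasis_extension_of_card_eq (by simp)
  have hb0 : b 0 = WithLp.toLp 2 n := hb 0 rfl
  refine ⟨((MeasurableEquiv.toLp 2 (Fin 3 → ℝ)).trans
    b.repr.symm.toHomeomorph.toMeasurableEquiv).trans (MeasurableEquiv.toLp 2 (Fin 3 → ℝ)).symm,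
    ?_, ?_, ?_⟩
  · exact (PiLp.volume_preserving_ofLp (Fin 3)).comp
      (b.measurePreserving_repr_symm.comp (PiLp.volume_preserving_toLp (Fin 3)))
  · intro x
    have h : ‖b.repr.symm (WithLp.toLp 2 x)‖ ^ 2 = ‖WithLp.toLp 2 x‖ ^ 2 := by
      rw [LinearIsometryEquiv.norm_map]
    rw [EuclideanSpace.real_norm_sq_eq, EuclideanSpace.real_norm_sq_eq, Fin.sum_univ_three, Fin.sum_univ_three] at h
    exact h
  · intro x
    have h : inner ℝ (b 0) (b.repr.symm (WithLp.toLp 2 x)) = x 0 := by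
      rw [← b.repr_apply_apply]
      simp
    rw [hb0] at h
    rw [PiLp.inner_apply, Fin.sum_univ_three] at h
    simp only [RCLike.inner_apply, conj_trivial] at h
    rw [← h]
    change n 0 * (b.repr.symm (WithLp.toLp 2 x)) 0 + n 1 * (b.repr.symm (WithLp.toLp 2 x)) 1
      + n 2 * (b.repr.symm (WithLp.toLp 2 x)) 2 = _
    ring

lemma aux_disc (s : ℝ) : volume.real {y : ℝ × ℝ | y.1 ^ 2 + y.2 ^ 2 ≤ s} =
    if 0 ≤ s then π * s else 0 := by
  split_ifs with hs
  · have h := Complex.volume_preserving_equiv_real_prod.measure_preimage_equiv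
      {y : ℝ × ℝ | y.1 ^ 2 + y.2 ^ 2 ≤ s}
    have h2 : Complex.measurableEquivRealProd ⁻¹' {y : ℝ × ℝ | y.1 ^ 2 + y.2 ^ 2 ≤ s} =
        Metric.closedBall 0 (√s) := by
      ext z
      simp only [Set.mem_preimage, Set.mem_ofPred_eq, Complex.measurableEquivRealProd_apply,
        mem_closedBall_zero_iff]
      rw [Real.le_sqrt (norm_nonneg _) hs, Complex.sq_norm, Complex.normSq_apply]
      ring_nf
    rw [Measure.real, ← h, h2, Complex.volume_closedBall, ENNReal.toReal_mul, ENNReal.toReal_pow,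
      ENNReal.toReal_ofReal (Real.sqrt_nonneg _), Real.sq_sqrt hs, mul_comm]
    simp
  · have : {y : ℝ × ℝ | y.1 ^ 2 + y.2 ^ 2 ≤ s} = ∅ := by
      ext y
      simp only [Set.mem_ofPred_eq, Set.mem_empty_iff_false, iff_false]
      nlinarith [sq_nonneg y.1, sq_nonneg y.2]
    rw [this]; simp

lemma aux_one_dim (R : ℝ) (c : ℂ) (hc : c ≠ 0) :
    ∫ x in (-R)..R, ((R ^ 2 - x ^ 2 : ℝ) : ℂ) * Complex.exp (c * x) =
      Complex.exp (c * R) * (2 * R / c ^ 2 - 2 / c ^ 3)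
      - Complex.exp (-(c * R)) * (-2 * R / c ^ 2 - 2 / c ^ 3) := by
  have hd : ∀ x : ℝ, HasDerivAt (fun x : ℝ => Complex.exp (c * x) *
      ((R ^ 2 - x ^ 2) / c + 2 * x / c ^ 2 - 2 / c ^ 3))
      (((R ^ 2 - x ^ 2 : ℝ) : ℂ) * Complex.exp (c * x)) x := by
    intro x
    have hx : HasDerivAt (fun x : ℝ => (x : ℂ)) 1 x := Complex.ofRealCLM.hasDerivAt
    have h1 := (hx.const_mul c).cexp
    have h2 := ((((hx.pow 2).const_sub ((R : ℂ) ^ 2)).div_const c).add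
      ((hx.const_mul 2).div_const (c ^ 2))).sub_const (2 / c ^ 3)
    refine (h1.mul h2).congr_deriv ?_
    simp
    field_simp
    ring
  rw [intervalIntegral.integral_eq_sub_of_hasDerivAt (fun x _ => hd x)]
  · push_cast
    ring_nf
  · apply Continuous.intervalIntegrable
    fun_prop

lemma aux_ball (R : ℝ) (hR : 0 ≤ R) (c : ℂ) :
    ∫ v in {v : ℝ × ℝ × ℝ | v.1 ^ 2 + v.2.1 ^ 2 + v.2.2 ^ 2 ≤ R ^ 2}, Complex.exp (c * v.1) =
      π * ∫ x in (-R)..R, ((R ^ 2 - x ^ 2 : ℝ) : ℂ) * Complex.exp (c * x) := by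
  set S := {v : ℝ × ℝ × ℝ | v.1 ^ 2 + v.2.1 ^ 2 + v.2.2 ^ 2 ≤ R ^ 2} with hS
  have hcl : IsClosed S := isClosed_le (by fun_prop) (by fun_prop)
  have hcpt : IsCompact S := by
    refine IsCompact.of_isClosed_subset (isCompact_Icc (a := ((-R, -R, -R) : ℝ × ℝ × ℝ))
      (b := (R, R, R))) hcl ?_
    rintro ⟨x, y, z⟩ h
    simp only [hS, Set.mem_ofPred_eq] at h
    have hx := abs_le.1 (abs_le_of_sq_le_sq (by nlinarith [sq_nonneg y, sq_nonneg z] : x ^ 2 ≤ R ^ 2) hR)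
    have hy := abs_le.1 (abs_le_of_sq_le_sq (by nlinarith [sq_nonneg x, sq_nonneg z] : y ^ 2 ≤ R ^ 2) hR)
    have hz := abs_le.1 (abs_le_of_sq_le_sq (by nlinarith [sq_nonneg y, sq_nonneg x] : z ^ 2 ≤ R ^ 2) hR)
    exact ⟨⟨hx.1, hy.1, hz.1⟩, ⟨hx.2, hy.2, hz.2⟩⟩
  have hint : IntegrableOn (fun v : ℝ × ℝ × ℝ => Complex.exp (c * v.1)) S :=
    ContinuousOn.integrableOn_compact hcpt (by fun_prop)
  rw [← integral_indicator hcl.measurableSet, Measure.volume_eq_prod,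
    integral_prod _ ((integrable_indicator_iff hcl.measurableSet).2 hint)]
  have hin : ∀ x : ℝ, ∫ y : ℝ × ℝ, S.indicator (fun v : ℝ × ℝ × ℝ => Complex.exp (c * v.1)) (x, y)
      = (Set.Icc (-R) R).indicator
        (fun x : ℝ => π * (((R ^ 2 - x ^ 2 : ℝ) : ℂ) * Complex.exp (c * x))) x := by
    intro x
    have h1 : ∀ y : ℝ × ℝ, S.indicator (fun v : ℝ × ℝ × ℝ => Complex.exp (c * v.1)) (x, y) =
        {y : ℝ × ℝ | y.1 ^ 2 + y.2 ^ 2 ≤ R ^ 2 - x ^ 2}.indicator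
          (fun _ => Complex.exp (c * x)) y := by
      intro y
      have : (x, y) ∈ S ↔ y ∈ {y : ℝ × ℝ | y.1 ^ 2 + y.2 ^ 2 ≤ R ^ 2 - x ^ 2} := by
        simp only [hS, Set.mem_ofPred_eq]
        constructor <;> intro h <;> linarith
      by_cases hy : (x, y) ∈ S
      · rw [Set.indicator_of_mem hy, Set.indicator_of_mem (this.1 hy)]
      · rw [Set.indicator_of_notMem hy, Set.indicator_of_notMem (fun h => hy (this.2 h))]
    have hm : MeasurableSet {y : ℝ × ℝ | y.1 ^ 2 + y.2 ^ 2 ≤ R ^ 2 - x ^ 2} :=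
      (isClosed_le (by fun_prop) (by fun_prop)).measurableSet
    simp_rw [h1]
    rw [integral_indicator hm, setIntegral_const, aux_disc]
    have hiff : 0 ≤ R ^ 2 - x ^ 2 ↔ x ∈ Set.Icc (-R) R := by
      rw [Set.mem_Icc, ← abs_le, sub_nonneg, sq_le_sq, abs_of_nonneg hR]
    by_cases hx : x ∈ Set.Icc (-R) R
    · rw [Set.indicator_of_mem hx, if_pos (hiff.2 hx), Complex.real_smul]
      push_cast
      ring
    · rw [Set.indicator_of_notMem hx, if_neg (fun h => hx (hiff.1 h))]
      simp
  simp_rw [hin]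
  rw [integral_indicator measurableSet_Icc, integral_const_mul, integral_Icc_eq_integral_Ioc,
    intervalIntegral.integral_of_le (by linarith)]

/-- For `a, t > 0` and nonzero `m ∈ ℤ³`, with `g(m) = √(a(m₁²+m₂²) + m₃²/a²)`, the Fourier
integral of the ellipsoid `(u₁²+u₂²)/a + a²u₃² ≤ t` equals
`−(√t/(π g²))·cos(2π g √t) + sin(2π g √t)/(2π² g³)`. -/
theorem fourier_integral_ellipsoid (a t : ℝ) (ha : 0 < a) (ht : 0 < t)
    (m : ℤ × ℤ × ℤ) (hm : m ≠ 0) (g : ℝ)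
    (hg : g = Real.sqrt (a * ((m.1 : ℝ) ^ 2 + (m.2.1 : ℝ) ^ 2) + (m.2.2 : ℝ) ^ 2 / a ^ 2)) :
    (∫ u in {u : ℝ × ℝ × ℝ | (u.1 ^ 2 + u.2.1 ^ 2) / a + a ^ 2 * u.2.2 ^ 2 ≤ t},
        Complex.exp (2 * (π : ℂ) * Complex.I *
          (((m.1 : ℝ) * u.1 + (m.2.1 : ℝ) * u.2.1 + (m.2.2 : ℝ) * u.2.2 : ℝ) : ℂ)))
      = ((-(Real.sqrt t * Real.cos (2 * π * g * Real.sqrt t)) / (π * g ^ 2)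
          + Real.sin (2 * π * g * Real.sqrt t) / (2 * π ^ 2 * g ^ 3) : ℝ) : ℂ) := by
  obtain ⟨m1, m2, m3⟩ := m
  simp only at hg ⊢
  have hpos : 0 < a * ((m1 : ℝ) ^ 2 + (m2 : ℝ) ^ 2) + (m3 : ℝ) ^ 2 / a ^ 2 := by
    by_cases h3 : m3 = 0
    · have h12 : 0 < (m1 : ℝ) ^ 2 + (m2 : ℝ) ^ 2 := by
        by_cases h1 : m1 = 0
        · have h2 : m2 ≠ 0 := by
            rintro rfl
            exact hm (by rw [h1, h3]; rfl)
          have : (m2 : ℝ) ≠ 0 := by exact_mod_cast h2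
          positivity
        · have : (m1 : ℝ) ≠ 0 := by exact_mod_cast h1
          positivity
      positivity
    · have : (m3 : ℝ) ≠ 0 := by exact_mod_cast h3
      positivity
  have hg0 : 0 < g := hg ▸ Real.sqrt_pos.2 hpos
  have hg2 : g ^ 2 = a * ((m1 : ℝ) ^ 2 + (m2 : ℝ) ^ 2) + (m3 : ℝ) ^ 2 / a ^ 2 := by
    rw [hg, Real.sq_sqrt hpos.le]
  have hsa : √a ^ 2 = a := Real.sq_sqrt ha.le
  obtain ⟨e, he, hex⟩ := aux_e
  obtain ⟨hD, hDe⟩ := aux_diag ![√a, √a, a⁻¹] (by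
    simp only [Matrix.cons_val]
    rw [← sq, hsa]; field_simp)
  obtain ⟨r, hr, hr1, hr2⟩ := aux_rot ![√a * m1 / g, √a * m2 / g, a⁻¹ * m3 / g] (by
    simp only [Matrix.cons_val]
    rw [div_pow, div_pow, div_pow, ← add_div, ← add_div, div_eq_one_iff_eq (by positivity), hg2]
    rw [mul_pow, mul_pow, mul_pow, hsa]
    field_simp)
  simp only [Matrix.cons_val] at hr2
  rw [← (he.comp (hD.comp hr)).setIntegral_preimage_emb
    (e.measurableEmbedding.comp (hDe.comp r.measurableEmbedding))]
  have hset : (e ∘ ((fun x : Fin 3 → ℝ => fun i => (![√a, √a, a⁻¹] : Fin 3 → ℝ) i * x i) ∘ r)) ⁻¹'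
      {u : ℝ × ℝ × ℝ | (u.1 ^ 2 + u.2.1 ^ 2) / a + a ^ 2 * u.2.2 ^ 2 ≤ t} =
      e ⁻¹' {v : ℝ × ℝ × ℝ | v.1 ^ 2 + v.2.1 ^ 2 + v.2.2 ^ 2 ≤ √t ^ 2} := by
    ext x
    simp only [Set.mem_preimage, Set.mem_ofPred_eq, Function.comp_apply, hex, Matrix.cons_val]
    rw [Real.sq_sqrt ht.le, ← hr1 x, mul_pow, mul_pow, mul_pow, hsa]
    have : (a * r x 0 ^ 2 + a * r x 1 ^ 2) / a + a ^ 2 * (a⁻¹ ^ 2 * r x 2 ^ 2) =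
      r x 0 ^ 2 + r x 1 ^ 2 + r x 2 ^ 2 := by field_simp
    rw [this]
  have hfun : ∀ x, Complex.exp (2 * (π : ℂ) * Complex.I *
          (((m1 : ℝ) * ((e ∘ ((fun x : Fin 3 → ℝ => fun i => (![√a, √a, a⁻¹] : Fin 3 → ℝ) i * x i) ∘ r)) x).1 + (m2 : ℝ) * ((e ∘ ((fun x : Fin 3 → ℝ => fun i => (![√a, √a, a⁻¹] : Fin 3 → ℝ) i * x i) ∘ r)) x).2.1 + (m3 : ℝ) * ((e ∘ ((fun x : Fin 3 → ℝ => fun i => (![√a, √a, a⁻¹] : Fin 3 → ℝ) i * x i) ∘ r)) x).2.2 : ℝ) : ℂ)) =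
      Complex.exp ((2 * π * g * Complex.I) * ((e x).1 : ℂ)) := by
    intro x
    simp only [Function.comp_apply, hex, Matrix.cons_val]
    have : (m1 : ℝ) * (√a * r x 0) + m2 * (√a * r x 1) + m3 * (a⁻¹ * r x 2) = g * x 0 := by
      rw [← hr2 x]; field_simp
    rw [this]
    push_cast
    ring_nf
  rw [hset]
  simp_rw [hfun]
  rw [he.setIntegral_preimage_emb e.measurableEmbedding
    (fun v : ℝ × ℝ × ℝ => Complex.exp ((2 * π * g * Complex.I) * (v.1 : ℂ))),
    aux_ball _ (Real.sqrt_nonneg t)]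
  have hgC : (g : ℂ) ≠ 0 := by exact_mod_cast hg0.ne'
  have hpC : (π : ℂ) ≠ 0 := by exact_mod_cast Real.pi_ne_zero
  rw [aux_one_dim _ _ (by simp [hgC, Real.pi_ne_zero])]
  have e1 : 2 * (π : ℂ) * g * Complex.I * (√t : ℝ) = (2 * π * g * (√t : ℝ)) * Complex.I := by ring
  rw [e1, ← neg_mul, Complex.exp_mul_I, Complex.exp_mul_I, Complex.cos_neg, Complex.sin_neg]
  push_cast
  have hI3 : Complex.I ^ 3 = -Complex.I := Complex.I_pow_three
  generalize Complex.cos (2 * π * g * (√t : ℝ)) = C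
  generalize Complex.sin (2 * π * g * (√t : ℝ)) = S
  simp only [mul_pow, Complex.I_sq, hI3]
  field_simp [Complex.I_ne_zero]
  ring_nf
  try simp only [Complex.I_sq, hI3]
  try ring_nf
end

section
/- Let a > 0, t > 0, and let m = (m₁,m₂,m₃) ∈ ℤ³ be nonzero. Set g := √(a(m₁² + m₂²) + m₃²/a²) and I(m,s) := ∫_{{u ∈ ℝ³ : (u₁²+u₂²)/a + a²u₃² ≤ s}} e^{2πi(m₁u₁ + m₂u₂ + m₃u₃)} du. Then the twice iterated integral I_{[2]}(m,t) := ∫_0^t ∫_0^{t₁} I(m,t₂) dt₂ dt₁ equals (t^{3/2}·cos(2πg√t))/(π³g⁴) − (3t·sin(2πg√t))/(π⁴g⁵) − (15√t·cos(2πg√t))/(4π⁵g⁶) + (15·sin(2πg√t))/(8π⁶g⁷). -/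
open MeasureTheory Real

lemma lem_second (k t : ℝ) (hk : k ≠ 0) (ht : 0 ≤ t) :
    ∫ s in (0:ℝ)..t, (8 * π / k^3 * (-s * Real.sin (k*√s) - 3 * √s * Real.cos (k*√s)/k + 3 * Real.sin (k*√s)/k^2))
     = 16 * π / k^3 * (t * √t * Real.cos (k*√t)/k - 6 * t * Real.sin (k*√t)/k^2 - 15 * √t * Real.cos (k*√t)/k^3 + 15 * Real.sin (k*√t)/k^4) := by
  rw [intervalIntegral.integral_eq_sub_of_hasDerivAt_of_le ht (f := fun t => 16 * π / k^3 * (t * √t * Real.cos (k*√t)/k - 6 * t * Real.sin (k*√t)/k^2 - 15 * √t * Real.cos (k*√t)/k^3 + 15 * Real.sin (k*√t)/k^4))]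
  · simp
  · fun_prop
  · intro x hx
    have hx0 : 0 < x := hx.1
    have h1 := Real.hasDerivAt_sqrt hx0.ne'
    have h2 := (h1.const_mul k).cos
    have h3 := (h1.const_mul k).sin
    have h4 := ((((((hasDerivAt_id x).mul h1).mul h2).div_const k).sub ((((hasDerivAt_id x).const_mul 6).mul h3).div_const (k^2))).sub (((h1.const_mul 15).mul h2).div_const (k^3))).add ((h3.const_mul 15).div_const (k^4))
    have h5 := h4.const_mul (16 * π / k^3)
    refine h5.congr_deriv ?_
    have hs : 0 < √x := Real.sqrt_pos.2 hx0
    obtain ⟨r, hr⟩ : ∃ r, r = √x := ⟨_, rfl⟩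
    have hxr : x = r^2 := by rw [hr, Real.sq_sqrt hx0.le]
    simp only [Pi.mul_apply, id, ← hr] at hs ⊢
    rw [hxr]
    field_simp
    ring
  · apply Continuous.intervalIntegrable
    fun_prop

lemma lem_first (k t : ℝ) (hk : k ≠ 0) (ht : 0 ≤ t) :
    ∫ s in (0:ℝ)..t, (4 * π / k^3 * (Real.sin (k*√s) - k * √s * Real.cos (k*√s)))
     = (8 * π / k^3 * (-t * Real.sin (k*√t) - 3 * √t * Real.cos (k*√t)/k + 3 * Real.sin (k*√t)/k^2)) := by
  rw [intervalIntegral.integral_eq_sub_of_hasDerivAt_of_le ht (f := fun t => (8 * π / k^3 * (-t * Real.sin (k*√t) - 3 * √t * Real.cos (k*√t)/k + 3 * Real.sin (k*√t)/k^2)))]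
  · simp
  · fun_prop
  · intro x hx
    have hx0 : 0 < x := hx.1
    have h1 := Real.hasDerivAt_sqrt hx0.ne'
    have h2 := (h1.const_mul k).cos
    have h3 := (h1.const_mul k).sin
    have h4 := ((((hasDerivAt_id x).neg.mul h3)).sub (((h1.const_mul 3).mul h2).div_const k)).add ((h3.const_mul 3).div_const (k^2))
    have h5 := h4.const_mul (8 * π / k^3)
    refine h5.congr_deriv ?_
    have hs : 0 < √x := Real.sqrt_pos.2 hx0
    obtain ⟨r, hr⟩ : ∃ r, r = √x := ⟨_, rfl⟩
    have hxr : x = r^2 := by rw [hr, Real.sq_sqrt hx0.le]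
    simp only [Pi.neg_apply, id, ← hr] at hs ⊢
    rw [hxr]
    field_simp
    ring
  · apply Continuous.intervalIntegrable
    fun_prop

lemma lem_line (k R : ℝ) (hk : k ≠ 0) :
    ∫ x in (-R)..R, Complex.exp (Complex.I * ((k * x : ℝ) : ℂ)) * ((π * (R^2 - x^2) : ℝ) : ℂ)
     = ((4 * π / k^3 * (Real.sin (k*R) - k * R * Real.cos (k*R)) : ℝ) : ℂ) := by
  have hk' : (k:ℂ) ≠ 0 := by exact_mod_cast hk
  have key : ∀ x : ℝ, HasDerivAt (fun x : ℝ => (π:ℂ) * Complex.exp (Complex.I * k * x) * (-Complex.I * (R^2 - x^2)/k - 2 * x /k^2 - 2 * Complex.I/ k^3))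
     (Complex.exp (Complex.I * ((k * x : ℝ) : ℂ)) * ((π * (R^2 - x^2) : ℝ) : ℂ)) x := by
    intro x
    have h0 : HasDerivAt (fun z : ℂ => (π:ℂ) * Complex.exp (Complex.I * k * z) * (-Complex.I * (R^2 - z^2)/k - 2 * z /k^2 - 2 * Complex.I/ k^3))
     (Complex.exp (Complex.I * ((k * x : ℝ) : ℂ)) * ((π * (R^2 - x^2) : ℝ) : ℂ)) x := by
      have hid := hasDerivAt_id (x:ℂ)
      have h1 := ((hid.const_mul (Complex.I * k)).cexp).const_mul (π:ℂ)
      have h2 := (((((hid.pow 2).const_sub ((R:ℂ)^2)).const_mul (-Complex.I)).div_const (k:ℂ)).sub ((hid.const_mul 2).div_const ((k:ℂ)^2))).sub_const (2 * Complex.I/ (k:ℂ)^3)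
      refine (h1.mul h2).congr_deriv ?_
      simp only [id, Pi.pow_apply, Pi.sub_apply]
      push_cast
      rw [← mul_assoc Complex.I]
      field_simp
      ring_nf
      simp only [Complex.I_sq]
      ring
    exact h0.comp_ofReal
  rw [intervalIntegral.integral_eq_sub_of_hasDerivAt (fun x _ => key x)]
  · have e1 : Complex.exp (Complex.I * k * (R:ℝ)) = Complex.cos (k*R) + Complex.sin (k*R) * Complex.I := by
      rw [← Complex.exp_mul_I]; congr 1; ring
    have e2 : Complex.exp (Complex.I * k * ((-R:ℝ):ℂ)) = Complex.cos (k*R) - Complex.sin (k*R) * Complex.I := by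
      rw [show Complex.I * k * ((-R:ℝ):ℂ) = -(k*R) * Complex.I by push_cast; ring, Complex.exp_mul_I]
      simp; ring
    rw [e1, e2]
    push_cast
    field_simp
    ring_nf
    simp only [Complex.I_sq]
    ring
  · apply Continuous.intervalIntegrable
    fun_prop

lemma lem_disc (c : ℝ) : (volume {y : ℝ × ℝ | y.1^2 + y.2^2 ≤ c}).toReal = if 0 ≤ c then π * c else 0 := by
  split_ifs with hc
  · rw [← (Complex.volume_preserving_equiv_real_prod).measure_preimage_equiv]
    have : (Complex.measurableEquivRealProd ⁻¹' {y : ℝ × ℝ | y.1^2 + y.2^2 ≤ c}) = Metric.closedBall (0:ℂ) (√c) := by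
      ext z
      simp only [Set.mem_preimage, Set.mem_ofPred_eq, Metric.mem_closedBall, dist_zero_right,
        Complex.measurableEquivRealProd_apply]
      rw [Real.le_sqrt (norm_nonneg _) hc, Complex.sq_norm, Complex.normSq_apply]
      simp only [sq]
    rw [this, Complex.volume_closedBall]
    simp only [ENNReal.toReal_mul, ENNReal.toReal_pow, ENNReal.toReal_ofReal (Real.sqrt_nonneg _), Real.sq_sqrt hc]
    simp [mul_comm]
  · have : {y : ℝ × ℝ | y.1^2 + y.2^2 ≤ c} = ∅ := by
      ext y; simp only [Set.mem_ofPred_eq, Set.mem_empty_iff_false, iff_false]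
      nlinarith [sq_nonneg y.1, sq_nonneg y.2]
    simp [this]

lemma lem_ball_prod (k R : ℝ) (hk : k ≠ 0) (hR : 0 ≤ R) :
    ∫ u in {u : ℝ × ℝ × ℝ | u.1 ^ 2 + (u.2.1 ^ 2 + u.2.2 ^ 2) ≤ R^2},
      Complex.exp (Complex.I * ((k * u.1 : ℝ) : ℂ))
     = ((4 * π / k^3 * (Real.sin (k*R) - k * R * Real.cos (k*R)) : ℝ) : ℂ) := by
  have hcl : IsClosed {u : ℝ × ℝ × ℝ | u.1 ^ 2 + (u.2.1 ^ 2 + u.2.2 ^ 2) ≤ R^2} :=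
    isClosed_le (by fun_prop) (by fun_prop)
  have hcomp : IsCompact {u : ℝ × ℝ × ℝ | u.1 ^ 2 + (u.2.1 ^ 2 + u.2.2 ^ 2) ≤ R^2} := by
    refine IsCompact.of_isClosed_subset (isCompact_closedBall (0 : ℝ × ℝ × ℝ) R) hcl ?_
    intro u hu
    simp only [Set.mem_ofPred_eq] at hu
    simp only [Metric.mem_closedBall, dist_zero_right, Prod.norm_def, sup_le_iff, Real.norm_eq_abs]
    refine ⟨?_, ?_, ?_⟩ <;> apply abs_le_of_sq_le_sq _ hR <;>
      nlinarith [sq_nonneg u.1, sq_nonneg u.2.1, sq_nonneg u.2.2]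
  have hint : IntegrableOn (fun u : ℝ × ℝ × ℝ => Complex.exp (Complex.I * ((k * u.1 : ℝ) : ℂ)))
      {u : ℝ × ℝ × ℝ | u.1 ^ 2 + (u.2.1 ^ 2 + u.2.2 ^ 2) ≤ R^2} := by
    apply ContinuousOn.integrableOn_compact hcomp
    fun_prop
  rw [← integral_indicator hcl.measurableSet, Measure.volume_eq_prod,
    integral_prod _ (by rw [← Measure.volume_eq_prod]; exact (integrable_indicator_iff hcl.measurableSet).2 hint)]
  have hin : ∀ x : ℝ, (∫ y : ℝ × ℝ, Set.indicator {u : ℝ × ℝ × ℝ | u.1 ^ 2 + (u.2.1 ^ 2 + u.2.2 ^ 2) ≤ R^2}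
      (fun u : ℝ × ℝ × ℝ => Complex.exp (Complex.I * ((k * u.1 : ℝ) : ℂ))) (x, y))
      = Set.indicator (Set.Icc (-R) R) (fun x => Complex.exp (Complex.I * ((k * x : ℝ) : ℂ)) * ((π * (R^2 - x^2) : ℝ) : ℂ)) x := by
    intro x
    have h1 : (fun y : ℝ × ℝ => Set.indicator {u : ℝ × ℝ × ℝ | u.1 ^ 2 + (u.2.1 ^ 2 + u.2.2 ^ 2) ≤ R^2}
      (fun u : ℝ × ℝ × ℝ => Complex.exp (Complex.I * ((k * u.1 : ℝ) : ℂ))) (x, y)) =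
      Set.indicator {y : ℝ × ℝ | y.1^2 + y.2^2 ≤ R^2 - x^2} (fun _ => Complex.exp (Complex.I * ((k * x : ℝ) : ℂ))) := by
      funext y
      simp only [Set.indicator_apply, Set.mem_ofPred_eq]
      congr 1
      simp only [eq_iff_iff]
      constructor <;> intro h <;> linarith
    rw [h1, integral_indicator (isClosed_le (by fun_prop) (by fun_prop)).measurableSet, setIntegral_const,
      Measure.real, lem_disc]
    have h2 : 0 ≤ R^2 - x^2 ↔ x ∈ Set.Icc (-R) R := by
      rw [sub_nonneg, sq_le_sq, abs_of_nonneg hR, abs_le, Set.mem_Icc]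
    rw [Set.indicator_apply]
    simp only [h2]
    split_ifs
    · rw [Complex.real_smul, mul_comm]
    · simp
  simp_rw [hin]
  rw [integral_indicator measurableSet_Icc, integral_Icc_eq_integral_Ioc,
    ← intervalIntegral.integral_of_le (by linarith), lem_line k R hk]

/-- identification -/
noncomputable def eqv3 : (Fin 3 → ℝ) ≃ᵐ ℝ × ℝ × ℝ :=
  (MeasurableEquiv.piFinSuccAbove (fun _ : Fin 3 => ℝ) 0).trans
    ((MeasurableEquiv.refl ℝ).prodCongr (MeasurableEquiv.finTwoArrow))

lemma eqv3_apply (x : Fin 3 → ℝ) : eqv3 x = (x 0, x 1, x 2) := by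
  simp [eqv3, MeasurableEquiv.piFinSuccAbove, MeasurableEquiv.finTwoArrow, Fin.removeNth]
  try rfl

lemma eqv3_mp : MeasurePreserving eqv3 := by
  unfold eqv3
  exact (volume_preserving_piFinSuccAbove (fun _ : Fin 3 => ℝ) 0).trans
    ((MeasurePreserving.id volume).prod (volume_preserving_finTwoArrow ℝ))

lemma lem_ball_E (w : EuclideanSpace ℝ (Fin 3)) (hw : w ≠ 0) (R : ℝ) (hR : 0 ≤ R) :
    ∫ x in Metric.closedBall (0 : EuclideanSpace ℝ (Fin 3)) R,
      Complex.exp (Complex.I * ((inner ℝ w x : ℝ) : ℂ))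
     = ((4 * π / ‖w‖^3 * (Real.sin (‖w‖*R) - ‖w‖ * R * Real.cos (‖w‖*R)) : ℝ) : ℂ) := by
  rw [← lem_ball_prod ‖w‖ R (norm_ne_zero_iff.2 hw) hR]
  rw [← eqv3_mp.setIntegral_preimage_emb eqv3.measurableEmbedding,
    ← (PiLp.volume_preserving_ofLp (Fin 3)).setIntegral_preimage_emb
      (MeasurableEquiv.toLp 2 (Fin 3 → ℝ)).symm.measurableEmbedding]
  set v : EuclideanSpace ℝ (Fin 3) := EuclideanSpace.single 0 ‖w‖ with hv
  have hnv : ‖v‖ = ‖w‖ := by simp [hv]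
  set T := (Submodule.reflection (Submodule.span ℝ {v - w})ᗮ) with hT
  have hTv : T v = w := Submodule.reflection_sub hnv
  rw [← (LinearIsometryEquiv.measurePreserving T).setIntegral_preimage_emb
    T.toHomeomorph.toMeasurableEquiv.measurableEmbedding]
  have hset : T ⁻¹' Metric.closedBall (0 : EuclideanSpace ℝ (Fin 3)) R = (@WithLp.ofLp 2 (Fin 3 → ℝ)) ⁻¹' (eqv3 ⁻¹' {u : ℝ × ℝ × ℝ | u.1 ^ 2 + (u.2.1 ^ 2 + u.2.2 ^ 2) ≤ R^2}) := by
    ext x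
    simp only [Set.mem_preimage, Metric.mem_closedBall, dist_zero_right, LinearIsometryEquiv.norm_map,
      Set.mem_ofPred_eq, eqv3_apply]
    rw [EuclideanSpace.norm_eq, Real.sqrt_le_left hR]
    simp [Fin.sum_univ_three, add_assoc]
  rw [hset]
  congr 1
  funext x
  rw [← hTv, LinearIsometryEquiv.inner_map_map, eqv3_apply, hv, EuclideanSpace.inner_single_left]
  simp

lemma lem_diag_mp (a : ℝ) (ha : 0 < a) :
    MeasurePreserving (Matrix.toLin' (Matrix.diagonal ![√a, √a, 1/a])) := by
  have hd : LinearMap.det (Matrix.toLin' (Matrix.diagonal ![√a, √a, 1/a])) = 1 := by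
    rw [LinearMap.det_toLin', Matrix.det_diagonal, Fin.prod_univ_three]
    simp [Real.mul_self_sqrt ha.le, ha.ne']
  refine ⟨(LinearMap.continuous_of_finiteDimensional _).measurable, ?_⟩
  rw [Real.map_linearMap_volume_pi_eq_smul_volume_pi (by rw [hd]; norm_num), hd]
  simp

lemma lem_diag_emb (a : ℝ) (ha : 0 < a) :
    MeasurableEmbedding (Matrix.toLin' (Matrix.diagonal ![√a, √a, 1/a])) := by
  have hs : √a ≠ 0 := (Real.sqrt_pos.2 ha).ne'
  refine Continuous.measurableEmbedding (LinearMap.continuous_of_finiteDimensional _) ?_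
  intro x y h
  have h' := fun i => congrFun h i
  simp only [Matrix.toLin'_apply, Matrix.mulVec_diagonal] at h'
  funext i
  have := h' i
  fin_cases i <;> simpa [hs, ha.ne'] using this

lemma lem_ellipsoid (a s : ℝ) (ha : 0 < a) (hs : 0 ≤ s) (p q r g : ℝ)
    (hg : g = √(a * (p^2+q^2) + r^2/a^2)) (hg0 : g ≠ 0) :
    ∫ u in {u : ℝ × ℝ × ℝ | (u.1 ^ 2 + u.2.1 ^ 2) / a + a ^ 2 * u.2.2 ^ 2 ≤ s},
        Complex.exp (2 * (π : ℂ) * Complex.I * ((p * u.1 + q * u.2.1 + r * u.2.2 : ℝ) : ℂ))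
    = ((4 * π / (2*π*g)^3 * (Real.sin ((2*π*g)*√s) - (2*π*g) * √s * Real.cos ((2*π*g)*√s)) : ℝ) : ℂ) := by
  set w : EuclideanSpace ℝ (Fin 3) := !₂[2*π*(√a*p), 2*π*(√a*q), 2*π*(r/a)] with hw
  have hgn : 0 ≤ g := hg ▸ Real.sqrt_nonneg _
  have hwn : ‖w‖ = 2*π*g := by
    rw [hw, EuclideanSpace.norm_eq, Fin.sum_univ_three, Real.sqrt_eq_iff_mul_self_eq (by positivity) (by positivity)]
    have h2 : g^2 = a * (p^2+q^2) + r^2/a^2 := by rw [hg, Real.sq_sqrt (by positivity)]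
    have h3 : √a^2 = a := Real.sq_sqrt ha.le
    simp only [Real.norm_eq_abs, sq_abs]
    simp
    simp only [mul_pow, h3, div_pow]
    linear_combination (-4*π^2) * h2
  have hw0 : w ≠ 0 := by
    rw [← norm_ne_zero_iff, hwn]; positivity
  rw [← hwn, ← lem_ball_E w hw0 _ (Real.sqrt_nonneg s)]
  rw [← eqv3_mp.setIntegral_preimage_emb eqv3.measurableEmbedding,
    ← (lem_diag_mp a ha).setIntegral_preimage_emb (lem_diag_emb a ha),
    ← (PiLp.volume_preserving_ofLp (Fin 3)).setIntegral_preimage_emb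
      (MeasurableEquiv.toLp 2 (Fin 3 → ℝ)).symm.measurableEmbedding]
  have hset : (@WithLp.ofLp 2 (Fin 3 → ℝ)) ⁻¹' ((Matrix.toLin' (Matrix.diagonal ![√a, √a, 1/a])) ⁻¹' (eqv3 ⁻¹' {u : ℝ × ℝ × ℝ | (u.1 ^ 2 + u.2.1 ^ 2) / a + a ^ 2 * u.2.2 ^ 2 ≤ s})) = Metric.closedBall (0 : EuclideanSpace ℝ (Fin 3)) (√s) := by
    ext x
    have h3 : √a^2 = a := Real.sq_sqrt ha.le
    simp only [Set.mem_preimage, Metric.mem_closedBall, dist_zero_right,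
      Set.mem_ofPred_eq, eqv3_apply, Matrix.toLin'_apply, Matrix.mulVec_diagonal]
    rw [EuclideanSpace.norm_eq, Real.sqrt_le_sqrt_iff hs]
    simp only [Fin.sum_univ_three, Real.norm_eq_abs, sq_abs]
    simp only [Matrix.cons_val_zero, Matrix.cons_val_one, Matrix.cons_val, mul_pow, h3]
    rw [show (a * x.ofLp 0 ^ 2 + a * x.ofLp 1 ^ 2) / a + a ^ 2 * ((1 / a) ^ 2 * x.ofLp 2 ^ 2) = x.ofLp 0 ^ 2 + x.ofLp 1 ^ 2 + x.ofLp 2 ^ 2 by field_simp]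
  rw [hset]
  congr 1
  funext x
  congr 1
  rw [mul_comm (2 * (π:ℂ)), mul_assoc]
  congr 1
  rw [eqv3_apply]
  simp only [Matrix.toLin'_apply, Matrix.mulVec_diagonal, PiLp.inner_apply, Fin.sum_univ_three, hw]
  simp
  ring

/-- For `a, t > 0`, nonzero `m ∈ ℤ³` and `g = √(a(m₁²+m₂²) + m₃²/a²)`, the twice iterated
integral `I_{[2]}(m,t) = ∫₀ᵗ ∫₀^{t₁} I(m,t₂) dt₂ dt₁` of the ellipsoid Fourier integral
`I(m,s)` equals
`t^{3/2}cos(2πg√t)/(π³g⁴) − 3t·sin(2πg√t)/(π⁴g⁵) − 15√t·cos(2πg√t)/(4π⁵g⁶) + 15·sin(2πg√t)/(8π⁶g⁷)`. -/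
theorem iterated_fourier_integral_ellipsoid (a t : ℝ) (ha : 0 < a) (ht : 0 < t)
    (m : ℤ × ℤ × ℤ) (hm : m ≠ 0) (g : ℝ)
    (hg : g = Real.sqrt (a * ((m.1 : ℝ) ^ 2 + (m.2.1 : ℝ) ^ 2) + (m.2.2 : ℝ) ^ 2 / a ^ 2))
    (I : ℝ → ℂ)
    (hI : ∀ s : ℝ, I s =
      ∫ u in {u : ℝ × ℝ × ℝ | (u.1 ^ 2 + u.2.1 ^ 2) / a + a ^ 2 * u.2.2 ^ 2 ≤ s},
        Complex.exp (2 * (π : ℂ) * Complex.I *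
          (((m.1 : ℝ) * u.1 + (m.2.1 : ℝ) * u.2.1 + (m.2.2 : ℝ) * u.2.2 : ℝ) : ℂ))) :
    (∫ t₁ in (0 : ℝ)..t, ∫ t₂ in (0 : ℝ)..t₁, I t₂)
      = ((t ^ ((3 : ℝ) / 2) * Real.cos (2 * π * g * Real.sqrt t) / (π ^ 3 * g ^ 4)
          - 3 * t * Real.sin (2 * π * g * Real.sqrt t) / (π ^ 4 * g ^ 5)
          - 15 * Real.sqrt t * Real.cos (2 * π * g * Real.sqrt t) / (4 * π ^ 5 * g ^ 6)
          + 15 * Real.sin (2 * π * g * Real.sqrt t) / (8 * π ^ 6 * g ^ 7) : ℝ) : ℂ) := by 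
  have hgpos : 0 < g := by
    rw [hg]
    apply Real.sqrt_pos.2
    by_contra hcon
    apply hm
    have h1 : 0 ≤ a * ((m.1 : ℝ) ^ 2 + (m.2.1 : ℝ) ^ 2) := by positivity
    have h2 : 0 ≤ (m.2.2 : ℝ) ^ 2 / a ^ 2 := by positivity
    have h3 : a * ((m.1 : ℝ) ^ 2 + (m.2.1 : ℝ) ^ 2) = 0 := by linarith
    have h4 : (m.2.2 : ℝ) ^ 2 / a ^ 2 = 0 := by linarith
    have h5 : (m.1 : ℝ) ^ 2 + (m.2.1 : ℝ) ^ 2 = 0 := by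
      rcases mul_eq_zero.1 h3 with h | h
      · exact absurd h ha.ne'
      · exact h
    have h6 : (m.1 : ℝ) = 0 := by
      apply pow_eq_zero_iff (two_ne_zero) |>.1
      nlinarith [sq_nonneg (m.1 : ℝ), sq_nonneg (m.2.1 : ℝ)]
    have h7 : (m.2.1 : ℝ) = 0 := by
      apply pow_eq_zero_iff (two_ne_zero) |>.1
      nlinarith [sq_nonneg (m.1 : ℝ), sq_nonneg (m.2.1 : ℝ)]
    have h8 : (m.2.2 : ℝ) = 0 := by
      simpa [ha.ne'] using h4
    ext
    · exact_mod_cast h6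
    · exact_mod_cast h7
    · exact_mod_cast h8
  have hk : 2 * π * g ≠ 0 := by positivity
  have hIs : ∀ s : ℝ, 0 ≤ s → I s = ((4 * π / (2*π*g)^3 * (Real.sin ((2*π*g)*√s)
      - (2*π*g) * √s * Real.cos ((2*π*g)*√s)) : ℝ) : ℂ) := by
    intro s hs
    rw [hI s]
    exact lem_ellipsoid a s ha hs _ _ _ g hg hgpos.ne'
  have hinner : ∀ t₁ : ℝ, 0 ≤ t₁ → (∫ t₂ in (0 : ℝ)..t₁, I t₂) =
      ((8 * π / (2*π*g)^3 * (-t₁ * Real.sin ((2*π*g)*√t₁) - 3 * √t₁ * Real.cos ((2*π*g)*√t₁)/(2*π*g)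
        + 3 * Real.sin ((2*π*g)*√t₁)/(2*π*g)^2) : ℝ) : ℂ) := by
    intro t₁ ht₁
    rw [← lem_first (2*π*g) t₁ hk ht₁, ← intervalIntegral.integral_ofReal]
    apply intervalIntegral.integral_congr
    intro s hs
    rw [Set.uIcc_of_le ht₁] at hs
    exact hIs s hs.1
  have houter : (∫ t₁ in (0 : ℝ)..t, ∫ t₂ in (0 : ℝ)..t₁, I t₂) =
      ((16 * π / (2*π*g)^3 * (t * √t * Real.cos ((2*π*g)*√t)/(2*π*g)
        - 6 * t * Real.sin ((2*π*g)*√t)/(2*π*g)^2 - 15 * √t * Real.cos ((2*π*g)*√t)/(2*π*g)^3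
        + 15 * Real.sin ((2*π*g)*√t)/(2*π*g)^4) : ℝ) : ℂ) := by
    rw [← lem_second (2*π*g) t hk ht.le, ← intervalIntegral.integral_ofReal]
    apply intervalIntegral.integral_congr
    intro s hs
    rw [Set.uIcc_of_le ht.le] at hs
    exact hinner s hs.1
  rw [houter]
  congr 1
  have hpow : t ^ ((3 : ℝ) / 2) = t * √t := by
    rw [show (3:ℝ)/2 = 1 + 1/2 by norm_num, Real.rpow_add ht, Real.rpow_one, Real.sqrt_eq_rpow]
  rw [hpow]
  have hpi : π ≠ 0 := Real.pi_ne_zero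
  have hg0 : g ≠ 0 := hgpos.ne'
  field_simp
  ring
end

section
/- The double series Σ_{r=0}^{∞} Σ_{s=0}^{∞} 2^{−r − 7s/12} / (2^{−r} + 2^{−s})^{17/12} converges and its sum is strictly less than 23.8. -/
/-- Rational upper bounds for `(1+2^{-k})^{-17/12}`. -/
noncomputable def cc : ℕ → ℝ
  | 0 => 37459 / 100000
  | 1 => 56305 / 100000
  | 2 => 72899 / 100000
  | 3 => 84633 / 100000
  | 4 => 91771 / 100000
  | 5 => 95736 / 100000
  | 6 => 97829 / 100000
  | 7 => 98905 / 100000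
  | _ => 1

lemma cc_of_ge (k : ℕ) (hk : 8 ≤ k) : cc k = 1 := by
  unfold cc
  split <;> first | omega | rfl

lemma cc_pos (k : ℕ) : 0 < cc k := by
  unfold cc
  split <;> norm_num

lemma cc_pow (k : ℕ) : 1 ≤ cc k ^ 12 * (1 + (1 / 2 : ℝ) ^ k) ^ 17 := by
  by_cases hk : 8 ≤ k
  · rw [cc_of_ge k hk, one_pow, one_mul]
    apply one_le_pow₀
    have : (0 : ℝ) < (1 / 2) ^ k := by positivity
    linarith
  · have hk : k < 8 := by omega
    interval_cases k <;> norm_num [cc]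

lemma cc_bound (k : ℕ) : 1 / (1 + (1 / 2 : ℝ) ^ k) ^ ((17 : ℝ) / 12) ≤ cc k := by
  have ht : (0 : ℝ) < 1 + (1 / 2 : ℝ) ^ k := by positivity
  have hc := cc_pos k
  rw [div_le_iff₀ (by positivity)]
  have h := cc_pow k
  have h2 : (cc k * (1 + (1 / 2 : ℝ) ^ k) ^ ((17 : ℝ) / 12)) ^ 12
      = cc k ^ 12 * (1 + (1 / 2 : ℝ) ^ k) ^ 17 := by
    rw [mul_pow, ← Real.rpow_mul_natCast ht.le]
    congr 1
    rw [← Real.rpow_natCast]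
    norm_num
  rw [← h2] at h
  by_contra hlt
  push Not at hlt
  have := pow_lt_one₀ (n := 12) (by positivity) hlt (by norm_num)
  linarith

lemma a_bound (k : ℕ) : (2 : ℝ) ^ (-(7 * (k : ℝ) / 12)) ≤ (66742 / 100000) ^ k := by
  have h : (2 : ℝ) ^ (-(7 : ℝ) / 12) ≤ 66742 / 100000 := by
    refine le_of_pow_le_pow_left₀ (n := 12) (by norm_num) (by norm_num) ?_
    rw [← Real.rpow_mul_natCast (by norm_num)]
    have : (-(7 : ℝ) / 12 * (12 : ℕ)) = ((-7 : ℤ) : ℝ) := by norm_num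
    rw [this, Real.rpow_intCast]
    norm_num
  calc (2 : ℝ) ^ (-(7 * (k : ℝ) / 12)) = ((2 : ℝ) ^ (-(7 : ℝ) / 12)) ^ k := by
        rw [← Real.rpow_mul_natCast (by norm_num)]; congr 1; ring
    _ ≤ _ := pow_le_pow_left₀ (by positivity) h k

lemma b_bound (k : ℕ) : (2 : ℝ) ^ (-((k : ℝ) / 6)) ≤ (89090 / 100000) ^ k := by
  have h : (2 : ℝ) ^ (-(1 : ℝ) / 6) ≤ 89090 / 100000 := by
    refine le_of_pow_le_pow_left₀ (n := 6) (by norm_num) (by norm_num) ?_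
    rw [← Real.rpow_mul_natCast (by norm_num)]
    have : (-(1 : ℝ) / 6 * (6 : ℕ)) = ((-1 : ℤ) : ℝ) := by norm_num
    rw [this, Real.rpow_intCast]
    norm_num
  calc (2 : ℝ) ^ (-((k : ℝ) / 6)) = ((2 : ℝ) ^ (-(1 : ℝ) / 6)) ^ k := by
        rw [← Real.rpow_mul_natCast (by norm_num)]; congr 1; ring
    _ ≤ _ := pow_le_pow_left₀ (by positivity) h k

/-- The summand. -/
noncomputable def ff (p : ℕ × ℕ) : ℝ :=
  (2 : ℝ) ^ (-(p.1 : ℝ) - 7 * (p.2 : ℝ) / 12) /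
        ((2 : ℝ) ^ (-(p.1 : ℝ)) + (2 : ℝ) ^ (-(p.2 : ℝ))) ^ ((17 : ℝ) / 12)

lemma half_pow (k : ℕ) : (2 : ℝ) ^ (-(k : ℝ)) = (1 / 2) ^ k := by
  rw [Real.rpow_neg (by norm_num), Real.rpow_natCast]; simp

lemma denom (m k : ℕ) :
    ((2 : ℝ) ^ (-(m : ℝ)) + (2 : ℝ) ^ (-((m + k : ℕ) : ℝ))) ^ ((17 : ℝ) / 12)
      = (2 : ℝ) ^ (-(17 * (m : ℝ) / 12)) * (1 + (1 / 2 : ℝ) ^ k) ^ ((17 : ℝ) / 12) := by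
  have : (2 : ℝ) ^ (-(m : ℝ)) + (2 : ℝ) ^ (-((m + k : ℕ) : ℝ))
      = (2 : ℝ) ^ (-(m : ℝ)) * (1 + (1 / 2 : ℝ) ^ k) := by
    simp only [half_pow, pow_add]; ring
  rw [this, Real.mul_rpow (by positivity) (by positivity), ← Real.rpow_mul (by norm_num)]
  congr 2; ring

lemma ff_one (m k : ℕ) :
    ff (m + k, m) ≤ (89090 / 100000) ^ m * (cc k * (1 / 2) ^ k) := by
  have e : ff (m + k, m) = (2 : ℝ) ^ (-((m : ℝ) / 6)) *
      (1 / (1 + (1 / 2 : ℝ) ^ k) ^ ((17 : ℝ) / 12) * (1 / 2) ^ k) := by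
    simp only [ff]
    rw [add_comm ((2 : ℝ) ^ (-((m + k : ℕ) : ℝ))), denom, ← half_pow k]
    have : (2 : ℝ) ^ (-((m + k : ℕ) : ℝ) - 7 * (m : ℝ) / 12) = (2 : ℝ) ^ (-((m : ℝ) / 6)) *
        (2 : ℝ) ^ (-(17 * (m : ℝ) / 12)) * (2 : ℝ) ^ (-(k : ℝ)) := by
      rw [← Real.rpow_add (by norm_num), ← Real.rpow_add (by norm_num)]
      congr 1; push_cast; ring
    rw [this]
    field_simp
  rw [e]
  have := cc_pos k
  exact mul_le_mul (b_bound m) (mul_le_mul_of_nonneg_right (cc_bound k) (by positivity))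
    (by positivity) (by positivity)

lemma ff_two (m k : ℕ) :
    ff (m, m + k) ≤ (89090 / 100000) ^ m * (cc k * (66742 / 100000) ^ k) := by
  have e : ff (m, m + k) = (2 : ℝ) ^ (-((m : ℝ) / 6)) *
      (1 / (1 + (1 / 2 : ℝ) ^ k) ^ ((17 : ℝ) / 12) * (2 : ℝ) ^ (-(7 * (k : ℝ) / 12))) := by
    simp only [ff]
    rw [denom]
    have : (2 : ℝ) ^ (-(m : ℝ) - 7 * ((m + k : ℕ) : ℝ) / 12) = (2 : ℝ) ^ (-((m : ℝ) / 6)) *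
        (2 : ℝ) ^ (-(17 * (m : ℝ) / 12)) * (2 : ℝ) ^ (-(7 * (k : ℝ) / 12)) := by
      rw [← Real.rpow_add (by norm_num), ← Real.rpow_add (by norm_num)]
      congr 1; push_cast; ring
    rw [this]
    field_simp
  rw [e]
  have := cc_pos k
  exact mul_le_mul (b_bound m) (mul_le_mul (cc_bound k) (a_bound k) (by positivity) this.le)
    (by positivity) (by positivity)

lemma sum_u : HasSum (fun k : ℕ => cc k * (1 / 2 : ℝ) ^ k)
    (2 + ∑ k ∈ Finset.range 8, (cc k - 1) * (1 / 2 : ℝ) ^ k) := by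
  have h1 := hasSum_geometric_two
  have h2 : HasSum (fun k : ℕ => (cc k - 1) * (1 / 2 : ℝ) ^ k)
      (∑ k ∈ Finset.range 8, (cc k - 1) * (1 / 2 : ℝ) ^ k) := by
    apply hasSum_sum_of_ne_finset_zero
    intro k hk
    rw [cc_of_ge k (by simpa using hk)]; simp
  refine (h1.add h2).congr_fun ?_
  intro k; ring

lemma sum_v : HasSum (fun k : ℕ => cc (k + 1) * (66742 / 100000 : ℝ) ^ (k + 1))
    ((1 - 66742 / 100000)⁻¹ * (66742 / 100000) +
      ∑ k ∈ Finset.range 8, (cc (k + 1) - 1) * (66742 / 100000 : ℝ) ^ (k + 1)) := by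
  have h1 := (hasSum_geometric_of_lt_one (r := (66742 / 100000 : ℝ)) (by norm_num)
    (by norm_num)).mul_right (66742 / 100000 : ℝ)
  have h2 : HasSum (fun k : ℕ => (cc (k + 1) - 1) * (66742 / 100000 : ℝ) ^ (k + 1))
      (∑ k ∈ Finset.range 8, (cc (k + 1) - 1) * (66742 / 100000 : ℝ) ^ (k + 1)) := by
    apply hasSum_sum_of_ne_finset_zero
    intro k hk
    have hk : 8 ≤ k := by simpa using hk
    rw [cc_of_ge (k + 1) (by omega)]; simp
  refine (h1.add h2).congr_fun ?_
  intro k; ring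

lemma sum_b : HasSum (fun m : ℕ => (89090 / 100000 : ℝ) ^ m) (1 - 89090 / 100000)⁻¹ :=
  hasSum_geometric_of_lt_one (by norm_num) (by norm_num)

lemma prod_sum {f g : ℕ → ℝ} {A B : ℝ} (hf : HasSum f A) (hg : HasSum g B)
    (hf0 : ∀ k, 0 ≤ f k) (hg0 : ∀ k, 0 ≤ g k) :
    HasSum (fun p : ℕ × ℕ => f p.1 * g p.2) (A * B) :=
  hf.mul hg (hf.summable.mul_of_nonneg hg.summable hf0 hg0)

/-- Majorant on `s ≤ r`. -/
noncomputable def G1 (p : ℕ × ℕ) : ℝ :=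
  if p.2 ≤ p.1 then (89090 / 100000) ^ p.2 * (cc (p.1 - p.2) * (1 / 2) ^ (p.1 - p.2)) else 0

/-- Majorant on `r < s`. -/
noncomputable def G2 (p : ℕ × ℕ) : ℝ :=
  if p.1 < p.2 then
    (89090 / 100000) ^ p.1 * (cc (p.2 - p.1) * (66742 / 100000) ^ (p.2 - p.1)) else 0

lemma sum_G1 : HasSum G1 ((1 - 89090 / 100000)⁻¹ *
    (2 + ∑ k ∈ Finset.range 8, (cc k - 1) * (1 / 2 : ℝ) ^ k)) := by
  have hi : Function.Injective (fun q : ℕ × ℕ => (q.1 + q.2, q.1)) := by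
    rintro ⟨a, b⟩ ⟨c, d⟩ h
    simp only [Prod.mk.injEq] at h ⊢
    omega
  rw [← hi.hasSum_iff]
  · have h := prod_sum sum_b sum_u (fun k => by positivity)
      (fun k => mul_nonneg (cc_pos k).le (by positivity))
    convert h using 2 with q
    simp [G1]
  · rintro ⟨r, s⟩ h
    unfold G1
    rw [if_neg]
    intro hle
    simp only at hle
    exact h ⟨(s, r - s), Prod.ext (by grind) (by grind)⟩

lemma sum_G2 : HasSum G2 ((1 - 89090 / 100000)⁻¹ *
    ((1 - 66742 / 100000)⁻¹ * (66742 / 100000) +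
      ∑ k ∈ Finset.range 8, (cc (k + 1) - 1) * (66742 / 100000 : ℝ) ^ (k + 1))) := by
  have hi : Function.Injective (fun q : ℕ × ℕ => (q.1, q.1 + (q.2 + 1))) := by
    rintro ⟨a, b⟩ ⟨c, d⟩ h
    simp only [Prod.mk.injEq] at h ⊢
    omega
  rw [← hi.hasSum_iff]
  · have h := prod_sum sum_b sum_v (fun k => by positivity)
      (fun k => mul_nonneg (cc_pos (k + 1)).le (by positivity))
    convert h using 2 with q
    simp [G2]
  · rintro ⟨r, s⟩ h
    unfold G2
    rw [if_neg]
    intro hle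
    simp only at hle
    exact h ⟨(r, s - r - 1), Prod.ext (by grind) (by grind)⟩

lemma ff_le (p : ℕ × ℕ) : ff p ≤ G1 p + G2 p := by
  obtain ⟨r, s⟩ := p
  rcases le_or_gt s r with h | h
  · obtain ⟨k, rfl⟩ := Nat.exists_eq_add_of_le h
    simpa [G1, G2] using ff_one s k
  · obtain ⟨k, rfl⟩ := Nat.exists_eq_add_of_le h.le
    have h' : 0 < k := by omega
    have h2 : k ≠ 0 := by omega
    simpa [G1, G2, h', h2] using ff_two r k

lemma ff_nonneg (p : ℕ × ℕ) : 0 ≤ ff p := by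
  unfold ff; positivity

/-- The double series `∑_{r,s ≥ 0} 2^{−r−7s/12}/(2^{−r}+2^{−s})^{17/12}` converges and its
sum is strictly less than `23.8`. -/
theorem double_series_lt_23_8 :
    Summable (fun p : ℕ × ℕ =>
      (2 : ℝ) ^ (-(p.1 : ℝ) - 7 * (p.2 : ℝ) / 12) /
        ((2 : ℝ) ^ (-(p.1 : ℝ)) + (2 : ℝ) ^ (-(p.2 : ℝ))) ^ ((17 : ℝ) / 12)) ∧
      (∑' p : ℕ × ℕ,
        (2 : ℝ) ^ (-(p.1 : ℝ) - 7 * (p.2 : ℝ) / 12) /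
          ((2 : ℝ) ^ (-(p.1 : ℝ)) + (2 : ℝ) ^ (-(p.2 : ℝ))) ^ ((17 : ℝ) / 12)) < 23.8 := by
  have hG := sum_G1.add sum_G2
  have hs : Summable ff := Summable.of_nonneg_of_le ff_nonneg ff_le hG.summable
  refine ⟨hs, ?_⟩
  have hle : ∑' p, ff p ≤ _ := hasSum_le ff_le hs.hasSum hG
  refine lt_of_le_of_lt hle ?_
  norm_num [Finset.sum_range_succ, cc]
end

section
/- The double series Σ_{r=0}^{∞} Σ_{s=0}^{∞} 2^{−r/2 − 5s/12} / (2^{−r} + 2^{−s})^{7/12} converges and its sum is strictly less than 27. -/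
noncomputable def F (r s : ℕ) : ℝ :=
  (2 : ℝ) ^ (-(r : ℝ) / 2 - 5 * (s : ℝ) / 12) /
        ((2 : ℝ) ^ (-(r : ℝ)) + (2 : ℝ) ^ (-(s : ℝ))) ^ ((7 : ℝ) / 12)

lemma F_nonneg (r s : ℕ) : 0 ≤ F r s := by unfold F; positivity

lemma two_neg (a : ℕ) : (2 : ℝ) ^ (-(a : ℝ)) = (1 / 2) ^ a := by
  rw [Real.rpow_neg (by norm_num), Real.rpow_natCast]; simp

lemma F_pow (a b : ℕ) :
    F a b ^ 12 = (1 / 2) ^ (6 * a + 5 * b) / ((1 / 2) ^ a + (1 / 2) ^ b) ^ 7 := by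
  unfold F
  rw [div_pow, two_neg, two_neg]
  congr 1
  · rw [← Real.rpow_mul_natCast (by norm_num), ← two_neg]
    congr 1
    push_cast
    ring
  · rw [← Real.rpow_mul_natCast (by positivity), ← Real.rpow_natCast _ 7]
    congr 1
    norm_num

lemma le_of_pow12 (v c : ℝ) (hc : 0 ≤ c) (h : v ^ 12 ≤ c ^ 12) : v ≤ c :=
  le_of_pow_le_pow_left₀ (by norm_num) hc h

lemma F_le (a b : ℕ) (c : ℝ) (hc : 0 ≤ c)
    (h : (1 / 2 : ℝ) ^ (6 * a + 5 * b) / ((1 / 2) ^ a + (1 / 2) ^ b) ^ 7 ≤ c ^ 12) :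
    F a b ≤ c := le_of_pow12 _ _ hc (by rw [F_pow]; exact h)

lemma eq_of_pow12 (v c : ℝ) (hv : 0 ≤ v) (hc : 0 ≤ c) (h : v ^ 12 = c ^ 12) : v = c :=
  le_antisymm (le_of_pow12 _ _ hc h.le) (le_of_pow12 _ _ hv h.ge)

lemma exists_root (z : ℝ) (hz : 0 ≤ z) : ∃ q : ℝ, 0 ≤ q ∧ q ^ 12 = z :=
  ⟨z ^ ((1 : ℝ) / 12), by positivity, by
    rw [← Real.rpow_mul_natCast hz]; norm_num⟩

lemma F_shift (q : ℝ) (hq : 0 ≤ q) (hq' : q ^ 12 = 1 / 16) (m a b : ℕ) :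
    F (m + a) (m + b) = q ^ m * F a b := by
  apply eq_of_pow12 _ _ (F_nonneg _ _) (mul_nonneg (by positivity) (F_nonneg _ _))
  rw [mul_pow, F_pow, F_pow, ← pow_mul, mul_comm m 12, pow_mul, hq', pow_add _ m a, pow_add _ m b,
    ← mul_add, mul_pow, show (1 / 16 : ℝ) = (1 / 2) ^ 4 by norm_num, ← pow_mul, ← pow_mul,
    mul_div_assoc', div_eq_div_iff (by positivity) (by positivity)]
  ring

def e : ℕ × ℤ ≃ ℕ × ℕ where
  toFun p := (p.1 + p.2.toNat, p.1 + (-p.2).toNat)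
  invFun p := (min p.1 p.2, (p.1 : ℤ) - p.2)
  left_inv := by rintro ⟨m, k⟩; ext <;> simp <;> omega
  right_inv := by rintro ⟨m, k⟩; ext <;> simp <;> omega

lemma tail_bound (u : ℕ → ℝ) (n : ℕ) (C x : ℝ) (hx : 0 ≤ x) (hx1 : x < 1) (hC : 0 ≤ C)
    (h0 : ∀ i, 0 ≤ u i) (h : ∀ i, u (i + n) ≤ C * x ^ i) :
    Summable u ∧ ∑' i, u i ≤ ∑ i ∈ Finset.range n, u i + C / (1 - x) := by
  have hg : Summable (fun i : ℕ => C * x ^ i) :=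
    (summable_geometric_of_lt_one hx hx1).mul_left C
  have hs : Summable (fun i => u (i + n)) :=
    Summable.of_nonneg_of_le (fun i => h0 _) h hg
  have hu := (summable_nat_add_iff n).1 hs
  refine ⟨hu, ?_⟩
  rw [← hu.sum_add_tsum_nat_add n]
  have := hs.tsum_le_tsum h hg
  rw [tsum_mul_left, tsum_geometric_of_lt_one hx hx1, ← div_eq_mul_inv] at this
  linarith

lemma one_le_aux (z : ℝ) (hz : 0 ≤ z) (w : ℝ) (hw : 0 ≤ w) : w / (z + 1) ^ 7 ≤ w :=
  div_le_self hw (one_le_pow₀ (by linarith))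

lemma sumA : Summable (fun i => F i 0) ∧ ∑' i, F i 0 ≤
    ∑ i ∈ Finset.range 6, F i 0 + (1 / 8) / (1 - 0.707107) := by
  apply tail_bound _ _ _ _ (by norm_num) (by norm_num) (by norm_num) (fun i => F_nonneg _ _)
  intro i
  apply F_le _ _ _ (by positivity)
  rw [pow_zero]
  refine (one_le_aux _ (by positivity) _ (by positivity)).trans ?_
  rw [mul_pow, ← pow_mul, mul_comm i 12, pow_mul, mul_zero, add_zero, mul_add, pow_add, pow_mul,
    mul_comm]
  gcongr <;> norm_num

lemma sumB : Summable (fun i => F 0 (i + 1)) ∧ ∑' i, F 0 (i + 1) ≤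
    ∑ i ∈ Finset.range 5, F 0 (i + 1) + (0.749154 ^ 6) / (1 - 0.749154) := by
  apply tail_bound _ _ _ _ (by norm_num) (by norm_num) (by norm_num) (fun i => F_nonneg _ _)
  intro i
  apply F_le _ _ _ (by positivity)
  rw [pow_zero, add_comm (1 : ℝ)]
  refine (one_le_aux _ (by positivity) _ (by positivity)).trans ?_
  rw [mul_pow, ← pow_mul _ i, mul_comm i 12, pow_mul _ 12 i, mul_zero, zero_add, add_assoc, mul_add,
    pow_add, pow_mul, mul_comm]
  gcongr <;> norm_num

lemma sumG : Summable (fun k : ℤ => F k.toNat (-k).toNat) ∧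
    ∑' k : ℤ, F k.toNat (-k).toNat ≤ (27 - 1/1000) * (1 - 0.793701) := by
  obtain ⟨hA, hA'⟩ := sumA
  obtain ⟨hB, hB'⟩ := sumB
  have H : HasSum (fun k : ℤ => F k.toNat (-k).toNat) (∑' i, F i 0 + ∑' i, F 0 (i + 1)) := by
    apply HasSum.of_nat_of_neg_add_one
    · convert hA.hasSum using 3 with n
      all_goals simp
    · convert hB.hasSum using 3 with n
      all_goals omega
  refine ⟨H.summable, ?_⟩
  rw [H.tsum_eq]
  have a0 : F 0 0 ≤ 66742/100000 := F_le _ _ _ (by norm_num) (by norm_num)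
  have a1 : F 1 0 ≤ 55817/100000 := F_le _ _ _ (by norm_num) (by norm_num)
  have a2 : F 2 0 ≤ 43898/100000 := F_le _ _ _ (by norm_num) (by norm_num)
  have a3 : F 3 0 ≤ 33008/100000 := F_le _ _ _ (by norm_num) (by norm_num)
  have a4 : F 4 0 ≤ 24132/100000 := F_le _ _ _ (by norm_num) (by norm_num)
  have a5 : F 5 0 ≤ 17364/100000 := F_le _ _ _ (by norm_num) (by norm_num)
  have b1 : F 0 1 ≤ 59136/100000 := F_le _ _ _ (by norm_num) (by norm_num)
  have b2 : F 0 2 ≤ 49274/100000 := F_le _ _ _ (by norm_num) (by norm_num)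
  have b3 : F 0 3 ≤ 39254/100000 := F_le _ _ _ (by norm_num) (by norm_num)
  have b4 : F 0 4 ≤ 30404/100000 := F_le _ _ _ (by norm_num) (by norm_num)
  have b5 : F 0 5 ≤ 23178/100000 := F_le _ _ _ (by norm_num) (by norm_num)
  simp only [Finset.sum_range_succ, Finset.sum_range_zero, Nat.reduceAdd] at hA' hB'
  norm_num at hA' hB' ⊢
  linarith

lemma main_aux : Summable (fun p : ℕ × ℕ => F p.1 p.2) ∧ ∑' p : ℕ × ℕ, F p.1 p.2 < 27 := by
  obtain ⟨q, hq, hq'⟩ := exists_root (1 / 16) (by norm_num)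
  have hq1 : q ≤ 0.793701 := le_of_pow12 _ _ (by norm_num) (by rw [hq']; norm_num)
  have hq2 : q < 1 := lt_of_le_of_lt hq1 (by norm_num)
  obtain ⟨hG, hG'⟩ := sumG
  have hgeo := summable_geometric_of_lt_one hq hq2
  have key : (fun p : ℕ × ℕ => F p.1 p.2) ∘ e =
      fun p : ℕ × ℤ => q ^ p.1 * F p.2.toNat (-p.2).toNat := by
    funext p
    exact F_shift q hq hq' _ _ _
  have hprod : Summable (fun p : ℕ × ℤ => q ^ p.1 * F p.2.toNat (-p.2).toNat) :=
    hgeo.mul_of_nonneg hG (fun i => by positivity) (fun k => F_nonneg _ _)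
  refine ⟨e.summable_iff.1 (key ▸ hprod), ?_⟩
  rw [← e.tsum_eq]
  have h1 : ∑' p : ℕ × ℤ, F (e p).1 (e p).2 =
      ∑' p : ℕ × ℤ, q ^ p.1 * F p.2.toNat (-p.2).toNat :=
    tsum_congr (fun p => congrFun key p)
  rw [h1, ← hgeo.tsum_mul_tsum hG hprod, tsum_geometric_of_lt_one hq hq2, inv_mul_eq_div,
    div_lt_iff₀ (by linarith)]
  norm_num at hG' hq1
  linarith

/-- The double series `∑_{r,s ≥ 0} 2^{−r/2−5s/12}/(2^{−r}+2^{−s})^{7/12}` converges and its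
sum is strictly less than `27`. -/
theorem double_series_lt_27 :
    Summable (fun p : ℕ × ℕ =>
      (2 : ℝ) ^ (-(p.1 : ℝ) / 2 - 5 * (p.2 : ℝ) / 12) /
        ((2 : ℝ) ^ (-(p.1 : ℝ)) + (2 : ℝ) ^ (-(p.2 : ℝ))) ^ ((7 : ℝ) / 12)) ∧
      (∑' p : ℕ × ℕ,
        (2 : ℝ) ^ (-(p.1 : ℝ) / 2 - 5 * (p.2 : ℝ) / 12) /
          ((2 : ℝ) ^ (-(p.1 : ℝ)) + (2 : ℝ) ^ (-(p.2 : ℝ))) ^ ((7 : ℝ) / 12)) < 27 := by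
  exact main_aux
end

section
/- The double series Σ_{r=0}^{∞} Σ_{s=0}^{∞} 2^{r + 7s/12} / (2^{r} + 2^{s})^{29/12} converges and its sum is at most 4. -/
theorem q_pow_le (n : ℕ) : (2 : ℝ) ^ (-(5 / 12 : ℝ) * (n : ℝ)) ≤ (3 / 4 : ℝ) ^ n := by
  rw [Real.rpow_mul (by norm_num), Real.rpow_natCast]
  refine pow_le_pow_left₀ (by positivity) ?_ n
  refine le_of_pow_le_pow_left₀ (n := 12) (by norm_num) (by norm_num) ?_
  rw [← Real.rpow_natCast, ← Real.rpow_mul (by norm_num)]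
  have h : (-(5 / 12 : ℝ) * ((12 : ℕ) : ℝ)) = -((5 : ℕ) : ℝ) := by norm_num
  rw [h, Real.rpow_neg (by norm_num), Real.rpow_natCast]
  norm_num

theorem term_le (r s : ℕ) :
    (2 : ℝ) ^ ((r : ℝ) + 7 * (s : ℝ) / 12) /
        ((2 : ℝ) ^ ((r : ℝ)) + (2 : ℝ) ^ ((s : ℝ))) ^ ((29 : ℝ) / 12)
      ≤ 1 / 4 * ((3 / 4 : ℝ) ^ r * (3 / 4 : ℝ) ^ s) := by
  have hx : 0 < (2 : ℝ) ^ (r : ℝ) := by positivity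
  have hy : 0 < (2 : ℝ) ^ (s : ℝ) := by positivity
  have hden : 4 * ((2 : ℝ) ^ (r : ℝ) * (2 : ℝ) ^ (s : ℝ)) * (2 : ℝ) ^ ((r : ℝ) * (5 / 12))
      ≤ ((2 : ℝ) ^ ((r : ℝ)) + (2 : ℝ) ^ ((s : ℝ))) ^ ((29 : ℝ) / 12) := by
    have e : ((29 : ℝ) / 12) = ((2 : ℕ) : ℝ) + 5 / 12 := by norm_num
    rw [e, Real.rpow_add (by positivity), Real.rpow_natCast _ 2, Real.rpow_mul (by norm_num)]
    refine mul_le_mul ?_ ?_ (by positivity) (by positivity)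
    · nlinarith [sq_nonneg ((2 : ℝ) ^ (r : ℝ) - (2 : ℝ) ^ (s : ℝ))]
    · exact Real.rpow_le_rpow hx.le (by linarith) (by norm_num)
  have hmul : (2 : ℝ) ^ (-(5 / 12 : ℝ) * (r : ℝ)) * (2 : ℝ) ^ (-(5 / 12 : ℝ) * (s : ℝ))
      ≤ (3 / 4 : ℝ) ^ r * (3 / 4 : ℝ) ^ s :=
    mul_le_mul (q_pow_le r) (q_pow_le s) (by positivity) (by positivity)
  rw [div_le_iff₀ (by positivity)]
  calc (2 : ℝ) ^ ((r : ℝ) + 7 * (s : ℝ) / 12)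
      = 1 / 4 * ((2 : ℝ) ^ (-(5 / 12 : ℝ) * (r : ℝ)) * (2 : ℝ) ^ (-(5 / 12 : ℝ) * (s : ℝ))) *
        (4 * ((2 : ℝ) ^ (r : ℝ) * (2 : ℝ) ^ (s : ℝ)) * (2 : ℝ) ^ ((r : ℝ) * (5 / 12))) := by
        have : ∀ a b c d e : ℝ, 1 / 4 * (a * b) * (4 * (c * d) * e) = a * b * c * d * e := by
          intros; ring
        rw [this]
        simp only [← Real.rpow_add (show (0 : ℝ) < 2 by norm_num)]
        congr 1
        ring
    _ ≤ _ := mul_le_mul (by linarith) hden (by positivity) (by positivity)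

/-- The double series `∑_{r,s ≥ 0} 2^{r+7s/12}/(2^{r}+2^{s})^{29/12}` converges and its
sum is at most `4`. -/
theorem double_series_le_4 :
    Summable (fun p : ℕ × ℕ =>
      (2 : ℝ) ^ ((p.1 : ℝ) + 7 * (p.2 : ℝ) / 12) /
        ((2 : ℝ) ^ ((p.1 : ℝ)) + (2 : ℝ) ^ ((p.2 : ℝ))) ^ ((29 : ℝ) / 12)) ∧
      (∑' p : ℕ × ℕ,
        (2 : ℝ) ^ ((p.1 : ℝ) + 7 * (p.2 : ℝ) / 12) /
          ((2 : ℝ) ^ ((p.1 : ℝ)) + (2 : ℝ) ^ ((p.2 : ℝ))) ^ ((29 : ℝ) / 12)) ≤ 4 := by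
  have hg : HasSum (fun n : ℕ => (3 / 4 : ℝ) ^ n) 4 := by
    have := hasSum_geometric_of_lt_one (r := (3 / 4 : ℝ)) (by norm_num) (by norm_num)
    norm_num at this
    exact this
  have hs : Summable (fun p : ℕ × ℕ => (3 / 4 : ℝ) ^ p.1 * (3 / 4 : ℝ) ^ p.2) :=
    hg.summable.mul_of_nonneg hg.summable (fun n => by positivity) (fun n => by positivity)
  have hG : HasSum (fun p : ℕ × ℕ => 1 / 4 * ((3 / 4 : ℝ) ^ p.1 * (3 / 4 : ℝ) ^ p.2))
      (1 / 4 * (4 * 4)) := (hg.mul hg hs).mul_left _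
  have hS := Summable.of_nonneg_of_le (fun p : ℕ × ℕ => by positivity)
    (fun p : ℕ × ℕ => term_le p.1 p.2) hG.summable
  refine ⟨hS, ?_⟩
  have := hS.tsum_le_tsum (fun p : ℕ × ℕ => term_le p.1 p.2) hG.summable
  rw [hG.tsum_eq] at this
  linarith
end
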